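/- arXiv:1202.4406 — 9 statements merged into one kernel-verified Lean document; each statement's English description precedes it below -/
import Mathlib

section
/- Let H be a strictly connected circular-arc hypergraph on n vertices and let λ, λ' : V(H) → ZMod n be two tight arc representations of H. Then λ' = σ ∘ λ ∘ π, where σ : ZMod n → ZMod n is a symmetry of the circle (a map of the form x ↦ x + s or x ↦ s − x for some s ∈ ZMod n) and π is a permutation of twins of H. -/
/-!
Every hyperedge `A` occupies, in a tight representation, an arc with a starting point `s A` and of
length `|A|`. Call an ordered pair `(A, B)` *forward* (`Fwd`) if, reading the circle clockwise, the
sets `A \ B`, `A ∩ B`, `B \ A` follow each other without gaps, with `A ∩ B` nonempty. Tightness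
implies that every strictly intersecting pair is forward in one of its two orders (`fwd_or_fwd`),
and then `s B - s A = |A \ B|` is determined by the sets alone (`Fwd.val_eq`). A reflection of the
circle exchanges `Fwd A B` and `Fwd B A` (`Fwd.reflect`).

The key fact (`fwd_conflict`) is that two tight representations cannot disagree on whether two
strict neighbours `A`, `C` of `B` lie on the same side of `B`. If they lie on the same side, then
the traces of `A` and `C` on `B` are comparable, and so are their traces outside `B`. If they lie
on different sides, comparability forces `A ⊊ B ⊊ C` or `C ⊊ B ⊊ A`, and tightness for the
pair `A`, `C` rules this out in the other representation.

Hence at each hyperedge the two representations either agree in the orientation of all incident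
pairs or differ in all of them (`agree_or_oppose`). By strict connectivity the same alternative
holds at all hyperedges. After a reflection all orientations agree, so `t A - s A` is the same
element for all hyperedges `A`: a rotation carries every arc of the first representation to the
corresponding arc of the second one, and the bijection of `V` induced by this preserves all
hyperedges, that is, it permutes twins.
-/

open Set

/-- The closed neighborhood of a vertex: the vertex together with its neighbors. -/
def ClosedNbhd {V : Type*} (G : SimpleGraph V) (v : V) : Set V :=
  {u | u = v ∨ G.Adj u v}

/-- `S` is an interval (order-convex set) with respect to the order relation `r`. -/
def IsIntervalWrt {α : Type*} (r : α → α → Prop) (S : Set α) : Prop :=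
  ∀ x y z, r x y → r y z → x ∈ S → z ∈ S → y ∈ S

/-- A family of hyperedges forms an interval hypergraph: some linear order on the
vertices makes every hyperedge an interval (a set of consecutive elements). -/
def IsIntervalHypergraph {α ι : Type*} (H : ι → Set α) : Prop :=
  ∃ r : α → α → Prop, IsLinearOrder α r ∧ ∀ i, IsIntervalWrt r (H i)

/-- `S ⊆ ZMod n` is an arc: a set of (at most `n`) circularly consecutive points. -/
def IsArc (n : ℕ) (S : Set (ZMod n)) : Prop :=
  ∃ a : ZMod n, ∃ k : ℕ, k ≤ n ∧ S = {x | ∃ i : ℕ, i < k ∧ x = a + (i : ZMod n)}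

/-- Arcs `A` and `B` share their start point: some point is a start point of both. -/
def SharesStart (n : ℕ) (A B : Set (ZMod n)) : Prop :=
  ∃ a, a ∈ A ∧ a - 1 ∉ A ∧ a ∈ B ∧ a - 1 ∉ B

/-- Arcs `A` and `B` share their end point: some point is an end point of both. -/
def SharesEnd (n : ℕ) (A B : Set (ZMod n)) : Prop :=
  ∃ a, a ∈ A ∧ a + 1 ∉ A ∧ a ∈ B ∧ a + 1 ∉ B

/-- `G` is a proper interval graph: it has an intersection model consisting of
nonempty integer intervals that are pairwise incomparable under inclusion. -/
def IsProperIntervalGraph {V : Type*} (G : SimpleGraph V) : Prop :=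
  ∃ l : V → Set ℤ,
    (∀ v, ∃ a b : ℤ, a ≤ b ∧ l v = Set.Icc a b) ∧
    (∀ u v, u ≠ v → ¬ l u ⊆ l v) ∧
    (∀ u v, u ≠ v → (G.Adj u v ↔ (l u ∩ l v).Nonempty))

/-- `G` is a circular-arc graph: it has an intersection model consisting of
nonempty arcs of some circle `ZMod n`. -/
def IsCAGraph {V : Type*} (G : SimpleGraph V) : Prop :=
  ∃ n : ℕ, 0 < n ∧ ∃ l : V → Set (ZMod n),
    Function.Injective l ∧
    (∀ v, (l v).Nonempty ∧ IsArc n (l v)) ∧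
    (∀ u v, u ≠ v → (G.Adj u v ↔ (l u ∩ l v).Nonempty))

/-- `G` is a proper circular-arc graph: it has an intersection model consisting of
nonempty arcs of some circle `ZMod n`, pairwise incomparable under inclusion. -/
def IsPCAGraph {V : Type*} (G : SimpleGraph V) : Prop :=
  ∃ n : ℕ, 0 < n ∧ ∃ l : V → Set (ZMod n),
    Function.Injective l ∧
    (∀ v, (l v).Nonempty ∧ IsArc n (l v)) ∧
    (∀ u v, u ≠ v → ¬ l u ⊆ l v) ∧
    (∀ u v, u ≠ v → (G.Adj u v ↔ (l u ∩ l v).Nonempty))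

/-- `G` is bipartite: the vertex set splits into two independent sets. -/
def IsBipartite {V : Type*} (G : SimpleGraph V) : Prop :=
  ∃ U : Set V, (∀ u ∈ U, ∀ v ∈ U, ¬ G.Adj u v) ∧ (∀ u ∉ U, ∀ v ∉ U, ¬ G.Adj u v)

/-- The hypergraph `H` is strictly connected: no isolated vertex, neither `∅` nor the
whole vertex set is a hyperedge, and the graph on the hyperedges with the strict
intersection relation `⋈*` is connected. -/
def StrictlyConnectedHypergraph {V : Type*} (H : Set (Set V)) : Prop :=
  (∀ x : V, ∃ A ∈ H, x ∈ A) ∧ ∅ ∉ H ∧ Set.univ ∉ H ∧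
  ∀ A ∈ H, ∀ B ∈ H, Relation.ReflTransGen
    (fun X Y => X ∈ H ∧ Y ∈ H ∧ (X ∩ Y).Nonempty ∧
      (X ⊆ Y ∨ Y ⊆ X ∨ X ∪ Y ≠ Set.univ)) A B

/-- `lam : V ≃ ZMod n` is a tight arc representation of `H`. -/
def IsTightArcRep {V : Type*} (n : ℕ) (H : Set (Set V)) (lam : V ≃ ZMod n) : Prop :=
  (∀ A ∈ H, IsArc n (lam '' A)) ∧
  (∀ A ∈ H, ∀ B ∈ H, B ⊆ A → B.Nonempty → lam '' A ≠ Set.univ →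
    SharesStart n (lam '' A) (lam '' B) ∨ SharesEnd n (lam '' A) (lam '' B))

/-- The strict intersection relation `⋈*` on sets of vertices. -/
def StrictMeet {V : Type*} (A B : Set V) : Prop :=
  (A ∩ B).Nonempty ∧ (A ⊆ B ∨ B ⊆ A ∨ A ∪ B ≠ Set.univ)

/-- A tight arc representation in terms of starting points: `A` is mapped onto the arc of length
`|A|` starting at `s A`, where `0 < |A| < n`, and nested hyperedges share their start or their end. -/
structure StartRep {V : Type*} (n : ℕ) (H : Set (Set V)) (lam : V ≃ ZMod n)
    (s : Set V → ZMod n) : Prop where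
  mem : ∀ A ∈ H, ∀ x, x ∈ A ↔ (lam x - s A).val < A.ncard
  pos : ∀ A ∈ H, 0 < A.ncard
  lt : ∀ A ∈ H, A.ncard < n
  tight : ∀ A ∈ H, ∀ B ∈ H, B ⊆ A →
    s A = s B ∨ s A + (A.ncard : ZMod n) = s B + (B.ncard : ZMod n)

/-- The pair `(A, B)` is forward for the starting points `s`: clockwise from `s A`, the arc of `B`
starts inside the arc of `A`, does not end before it, and leaves out the point just before
`s A`. -/
def Fwd {V : Type*} {n : ℕ} (s : Set V → ZMod n) (A B : Set V) : Prop :=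
  (s B - s A).val < A.ncard ∧ A.ncard ≤ (s B - s A).val + B.ncard ∧
    (s B - s A).val + B.ncard < n

/-- Starting points after the reflection `x ↦ -x`: the old end points, negated. -/
noncomputable def reflStart {V : Type*} {n : ℕ} (s : Set V → ZMod n) (A : Set V) : ZMod n :=
  1 - s A - (A.ncard : ZMod n)

/-! ### Arithmetic on the circle -/

lemma val_shift {n : ℕ} [NeZero n] (x a b : ZMod n) :
    (x - b).val = if (b - a).val ≤ (x - a).val then (x - a).val - (b - a).val
      else (x - a).val + n - (b - a).val := by
  have hx := ZMod.val_lt (x - a)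
  have hb := ZMod.val_lt (b - a)
  split_ifs with h
  · rw [← ZMod.val_sub h]; congr 1; ring
  · have e : x - b = (((x - a).val + n - (b - a).val : ℕ) : ZMod n) := by
      rw [Nat.cast_sub (by omega)]
      simp
    rw [e, ZMod.val_natCast_of_lt (by omega)]

lemma val_swap {n : ℕ} [NeZero n] (a b : ZMod n) :
    (a - b).val = if (b - a).val = 0 then 0 else n - (b - a).val := by
  have := val_shift a a b
  simp only [sub_self, ZMod.val_zero] at this
  rw [this]
  split_ifs <;> omega

lemma ncard_arc {V : Type*} {n : ℕ} [NeZero n] (lam : V ≃ ZMod n) (a : ZMod n) (k : ℕ)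
    (hk : k ≤ n) : {x : V | (lam x - a).val < k}.ncard = k := by
  have e : {x : V | (lam x - a).val < k} =
      (fun i : ℕ => lam.symm (a + (i : ZMod n))) '' (Finset.range k : Set ℕ) := by
    ext x
    simp only [Set.mem_ofPred_eq, Set.mem_image, Finset.coe_range, Set.mem_Iio]
    constructor
    · intro h
      exact ⟨_, h, by simp⟩
    · rintro ⟨i, hi, rfl⟩
      simp [ZMod.val_natCast_of_lt (show i < n by omega), hi]
  rw [e, Set.InjOn.ncard_image, Set.ncard_coe_finset, Finset.card_range]
  intro i hi j hj hij
  simp only [Finset.coe_range, Set.mem_Iio] at hi hj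
  have h2 : (i : ZMod n) = j := by simpa using hij
  have h3 := congrArg ZMod.val h2
  rwa [ZMod.val_natCast_of_lt (by omega), ZMod.val_natCast_of_lt (by omega)] at h3

lemma start_unique {n : ℕ} [NeZero n] {a x : ZMod n} {k : ℕ} (hk : k < n)
    (h1 : (x - a).val < k) (h2 : ¬ (x - 1 - a).val < k) : x = a := by
  by_contra hne
  have hv : (x - a).val ≠ 0 := by
    rw [Ne, ZMod.val_eq_zero, sub_eq_zero]; exact hne
  have e : x - 1 - a = (((x - a).val - 1 : ℕ) : ZMod n) := by
    rw [Nat.cast_sub (by omega)]; simp; ring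
  rw [e, ZMod.val_natCast_of_lt (by omega)] at h2
  omega

lemma end_unique {n : ℕ} [NeZero n] {a x : ZMod n} {k : ℕ} (hk : k < n)
    (h1 : (x - a).val < k) (h2 : ¬ (x + 1 - a).val < k) : x + 1 = a + (k : ZMod n) := by
  have e : x + 1 - a = (((x - a).val + 1 : ℕ) : ZMod n) := by
    simp; ring
  have h3 := h2
  rw [e, ZMod.val_natCast_of_lt (by omega)] at h3
  have : k = (x - a).val + 1 := by omega
  rw [this]; simp; ring

/-! ### Starting points of a tight representation -/

lemma exists_startRep {V : Type*} [Fintype V] {n : ℕ} [NeZero n] {H : Set (Set V)}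
    (h0 : ∅ ∉ H) (hU : Set.univ ∉ H) (hn : Fintype.card V = n)
    {lam : V ≃ ZMod n} (h : IsTightArcRep n H lam) : ∃ s, StartRep n H lam s := by
  have key : ∀ A ∈ H, ∃ a : ZMod n, ∀ x, x ∈ A ↔ (lam x - a).val < A.ncard := by
    intro A hA
    obtain ⟨a, k, hk, e⟩ := h.1 A hA
    have hm : ∀ x, x ∈ A ↔ (lam x - a).val < k := by
      intro x
      have : x ∈ A ↔ lam x ∈ lam '' A := by simp
      rw [this, e]
      constructor
      · rintro ⟨i, hi, hx⟩
        rw [hx]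
        simp [ZMod.val_natCast_of_lt (show i < n by omega), hi]
      · intro hx
        exact ⟨_, hx, by simp⟩
    have hc : A.ncard = k := by
      rw [← ncard_arc lam a k hk]; congr 1; ext x; exact hm x
    exact ⟨a, by rw [hc]; exact hm⟩
  have hne : ∀ A ∈ H, A.Nonempty := fun A hA =>
    Set.nonempty_iff_ne_empty.2 fun e => h0 (e ▸ hA)
  choose! s hs using key
  have hlt : ∀ A ∈ H, A.ncard < n := by
    intro A hA
    have hA' : A ≠ Set.univ := fun e => hU (e ▸ hA)
    rw [← hn, ← Nat.card_eq_fintype_card, ← Set.ncard_univ]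
    exact Set.ncard_lt_ncard (Set.ssubset_univ_iff.2 hA')
  refine ⟨s, hs, fun A hA => (Set.ncard_pos).2 (hne A hA), hlt, ?_⟩
  intro A hA B hB hBA
  have hA' : lam '' A ≠ Set.univ := by
    intro e
    apply hU
    have : A = Set.univ := by
      rw [Set.eq_univ_iff_forall]
      intro x
      have : lam x ∈ lam '' A := e ▸ Set.mem_univ _
      simpa using this
    exact this ▸ hA
  have mem' : ∀ C ∈ H, ∀ y, y ∈ lam '' C ↔ (y - s C).val < C.ncard := by
    intro C hC y
    have := hs C hC (lam.symm y)
    rw [lam.apply_symm_apply] at this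
    rw [← this]
    constructor
    · rintro ⟨x, hx, rfl⟩; simpa using hx
    · intro hx; exact ⟨_, hx, by simp⟩
  rcases h.2 A hA B hB hBA (hne B hB) hA' with ⟨a, p1, p2, p3, p4⟩ | ⟨a, p1, p2, p3, p4⟩
  · rw [mem' A hA] at p1 p2
    rw [mem' B hB] at p3 p4
    exact Or.inl ((start_unique (hlt A hA) p1 p2).symm.trans (start_unique (hlt B hB) p3 p4))
  · rw [mem' A hA] at p1 p2
    rw [mem' B hB] at p3 p4
    exact Or.inr ((end_unique (hlt A hA) p1 p2).symm.trans (end_unique (hlt B hB) p3 p4))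

/-! ### Reflection -/

lemma StartRep.reflect {V : Type*} {n : ℕ} [NeZero n] {H : Set (Set V)} {lam : V ≃ ZMod n}
    {s : Set V → ZMod n} (h : StartRep n H lam s) :
    StartRep n H (lam.trans (Equiv.neg _)) (reflStart s) := by
  refine ⟨?_, h.pos, h.lt, ?_⟩
  · intro A hA x
    have hk := h.lt A hA
    have hp := h.pos A hA
    have hv := ZMod.val_lt (lam x - s A)
    rw [h.mem A hA x]
    set k := A.ncard with hkdef
    simp only [Equiv.trans_apply, Equiv.neg_apply, reflStart, ← hkdef]
    by_cases hc : (lam x - s A).val < k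
    · have e : -lam x - (1 - s A - (k : ZMod n)) =
          ((k - 1 - (lam x - s A).val : ℕ) : ZMod n) := by
        rw [Nat.cast_sub (by omega), Nat.cast_sub (by omega)]; simp; ring
      rw [e, ZMod.val_natCast_of_lt (by omega)]
      omega
    · have e : -lam x - (1 - s A - (k : ZMod n)) =
          ((n + k - 1 - (lam x - s A).val : ℕ) : ZMod n) := by
        rw [Nat.cast_sub (by omega), Nat.cast_sub (by omega)]; simp; ring
      rw [e, ZMod.val_natCast_of_lt (by omega)]
      omega
  · intro A hA B hB hBA
    simp only [reflStart]
    rcases h.tight A hA B hB hBA with e | e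
    · right; rw [e]; ring
    · left; linear_combination -e

lemma Fwd.reflect {V : Type*} {n : ℕ} [NeZero n] {s : Set V → ZMod n} {A B : Set V}
    (h : Fwd s B A) : Fwd (reflStart s) A B := by
  obtain ⟨h1, h2, h3⟩ := h
  have e : reflStart s B - reflStart s A =
      (((s A - s B).val + A.ncard - B.ncard : ℕ) : ZMod n) := by
    rw [Nat.cast_sub (by omega)]; simp [reflStart]; ring
  have hv : (reflStart s B - reflStart s A).val = (s A - s B).val + A.ncard - B.ncard := by
    rw [e, ZMod.val_natCast_of_lt (by omega)]
  refine ⟨?_, ?_, ?_⟩ <;> rw [hv] <;> omega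

/-! ### Forward pairs -/

section
set_option linter.unusedSectionVars false
variable {V : Type*} {n : ℕ} [NeZero n] {H : Set (Set V)} {lam : V ≃ ZMod n}
  {s : Set V → ZMod n} {A B C : Set V}

/-- Membership in `A`, read clockwise from the start of `B`, when `(A, B)` is forward. -/
lemma StartRep.mem_left (h : StartRep n H lam s) (hA : A ∈ H) (f : Fwd s A B) (x : V) :
    x ∈ A ↔ (lam x - s B).val + (s B - s A).val < A.ncard ∨
      n ≤ (lam x - s B).val + (s B - s A).val := by
  obtain ⟨f1, f2, f3⟩ := f
  have hk := h.lt A hA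
  have := val_shift (lam x) (s B) (s A)
  have h2 := val_swap (s A) (s B)
  have hv := ZMod.val_lt (lam x - s B)
  have hv2 := ZMod.val_lt (lam x - s A)
  rw [h.mem A hA x]
  split_ifs at this h2 <;> omega

/-- Membership in `C`, read clockwise from the start of `B`, when `(B, C)` is forward. -/
lemma StartRep.mem_right (h : StartRep n H lam s) (hC : C ∈ H) (f : Fwd s B C) (x : V) :
    x ∈ C ↔ (s C - s B).val ≤ (lam x - s B).val ∧
      (lam x - s B).val < (s C - s B).val + C.ncard := by
  obtain ⟨f1, f2, f3⟩ := f
  have := val_shift (lam x) (s B) (s C)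
  have hv := ZMod.val_lt (lam x - s B)
  rw [h.mem C hC x]
  split_ifs at this <;> omega

/-- In a forward pair the offset of the starting points is `|A \ B|`. -/
lemma Fwd.val_eq (h : StartRep n H lam s) (hA : A ∈ H) (hB : B ∈ H) (f : Fwd s A B) :
    (s B - s A).val = (A \ B).ncard := by
  rw [← ncard_arc lam (s A) (s B - s A).val (ZMod.val_lt _).le]
  congr 1
  ext x
  rw [Set.mem_sdiff, h.mem_right hB f x, h.mem A hA x]
  obtain ⟨f1, f2, f3⟩ := f
  simp only [Set.mem_ofPred_eq]
  omega

lemma Fwd.antisymm (h : StartRep n H lam s) (hA : A ∈ H) (hB : B ∈ H) (f : Fwd s A B)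
    (g : Fwd s B A) : A = B := by
  obtain ⟨f1, f2, f3⟩ := f
  obtain ⟨g1, g2, g3⟩ := g
  have e := val_swap (s A) (s B)
  split_ifs at e with h0
  · have e2 : s B = s A := by rwa [ZMod.val_eq_zero, sub_eq_zero] at h0
    have e3 : A.ncard = B.ncard := by omega
    ext x
    rw [h.mem A hA, h.mem B hB, e2, e3]
  · omega

lemma Fwd.refl (h : StartRep n H lam s) (hA : A ∈ H) : Fwd s A A := by
  have := h.pos A hA
  have := h.lt A hA
  refine ⟨?_, ?_, ?_⟩ <;> simp <;> omega

lemma fwd_of_subset [Finite V] (h : StartRep n H lam s) (hA : A ∈ H) (hB : B ∈ H) (hBA : B ⊆ A) :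
    Fwd s A B ∨ Fwd s B A := by
  have hle := Set.ncard_le_ncard hBA
  have := h.pos A hA
  have := h.pos B hB
  have := h.lt A hA
  rcases h.tight A hA B hB hBA with e | e
  · right
    refine ⟨?_, ?_, ?_⟩ <;> rw [e] <;> simp <;> omega
  · left
    have e2 : s B - s A = ((A.ncard - B.ncard : ℕ) : ZMod n) := by
      rw [Nat.cast_sub hle]; linear_combination -e
    have hv : (s B - s A).val = A.ncard - B.ncard := by
      rw [e2, ZMod.val_natCast_of_lt (by omega)]
    refine ⟨?_, ?_, ?_⟩ <;> rw [hv] <;> omega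

lemma fwd_of_start_mem (h : StartRep n H lam s) (hA : A ∈ H) (hB : B ∈ H) (hBA : ¬ B ⊆ A)
    (hU : A ∪ B ≠ Set.univ) (hs : (s B - s A).val < A.ncard) : Fwd s A B := by
  obtain ⟨y, hy⟩ := (Set.ne_univ_iff_exists_notMem _).1 hU
  simp only [Set.mem_union, not_or] at hy
  obtain ⟨z, hz, hz'⟩ := Set.not_subset.1 hBA
  rw [h.mem A hA, h.mem B hB] at hy
  rw [h.mem B hB] at hz
  rw [h.mem A hA] at hz'
  have e1 := val_shift (lam y) (s A) (s B)
  have e2 := val_shift (lam z) (s A) (s B)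
  have := ZMod.val_lt (lam y - s A)
  have := ZMod.val_lt (lam z - s A)
  refine ⟨hs, ?_, ?_⟩ <;> split_ifs at e1 e2 <;> omega

lemma fwd_or_fwd [Finite V] (h : StartRep n H lam s) (hA : A ∈ H) (hB : B ∈ H)
    (hm : StrictMeet A B) : Fwd s A B ∨ Fwd s B A := by
  obtain ⟨⟨x, hxA, hxB⟩, hm⟩ := hm
  by_cases h1 : B ⊆ A
  · exact fwd_of_subset h hA hB h1
  by_cases h2 : A ⊆ B
  · exact (fwd_of_subset h hB hA h2).symm
  have hU : A ∪ B ≠ Set.univ := by tauto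
  by_cases h3 : (s B - s A).val < A.ncard
  · exact Or.inl (fwd_of_start_mem h hA hB h1 hU h3)
  · refine Or.inr (fwd_of_start_mem h hB hA h2 (by rwa [Set.union_comm]) ?_)
    rw [h.mem A hA] at hxA
    rw [h.mem B hB] at hxB
    have e1 := val_shift (lam x) (s A) (s B)
    have e2 := val_swap (s A) (s B)
    split_ifs at e1 e2 <;> omega

/-! ### Consistency of sides -/

/-- Two sets on the same side of `B` have comparable traces on `B` and outside `B`. -/
lemma comparable_of_same_side (h : StartRep n H lam s) (hA : A ∈ H) (hB : B ∈ H) (hC : C ∈ H)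
    (f : Fwd s A B) (g : Fwd s C B) :
    (A ∩ B ⊆ C ∨ C ∩ B ⊆ A) ∧ (A \ B ⊆ C ∨ C \ B ⊆ A) := by
  have mA := h.mem_left hA f
  have mC := h.mem_left hC g
  have mB := h.mem B hB
  obtain ⟨f1, f2, f3⟩ := f
  obtain ⟨g1, g2, g3⟩ := g
  constructor
  · rcases le_total (A.ncard - (s B - s A).val) (C.ncard - (s B - s C).val) with hle | hle
    · left
      rintro x ⟨hx, hx'⟩
      rw [mA] at hx; rw [mB] at hx'; rw [mC]; omega
    · right
      rintro x ⟨hx, hx'⟩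
      rw [mC] at hx; rw [mB] at hx'; rw [mA]; omega
  · rcases le_total (s B - s A).val (s B - s C).val with hle | hle
    · left
      rintro x ⟨hx, hx'⟩
      rw [mA] at hx; rw [mB] at hx'; rw [mC]; omega
    · right
      rintro x ⟨hx, hx'⟩
      rw [mC] at hx; rw [mB] at hx'; rw [mA]; omega

lemma exists_val_eq (lam : V ≃ ZMod n) (b : ZMod n) {i : ℕ} (hi : i < n) :
    ∃ x, (lam x - b).val = i :=
  ⟨lam.symm (b + i), by simp [ZMod.val_natCast_of_lt hi]⟩

/-- For sets on different sides of `B`, comparable traces on `B` force one of them to contain `B`,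
and comparable traces outside `B` force one of them to lie inside `B`. -/
lemma nested_of_opposite_sides (h : StartRep n H lam s) (hA : A ∈ H) (hB : B ∈ H) (hC : C ∈ H)
    (f : Fwd s A B) (g : Fwd s B C) :
    ((A ∩ B ⊆ C ∨ C ∩ B ⊆ A) → (B ⊆ A ∨ B ⊆ C)) ∧
    ((A \ B ⊆ C ∨ C \ B ⊆ A) → (A ⊆ B ∨ C ⊆ B)) := by
  have mA := h.mem_left hA f
  have mC := h.mem_right hC g
  have mB := h.mem B hB
  obtain ⟨f1, f2, f3⟩ := f
  obtain ⟨g1, g2, g3⟩ := g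
  refine ⟨?_, ?_⟩
  · rintro (hs | hs)
    · -- the first point of `B` lies in `A`, hence in `C`
      right
      obtain ⟨x, hx⟩ := exists_val_eq lam (s B) (show 0 < n by omega)
      have : x ∈ C := hs ⟨by rw [mA]; omega, by rw [mB]; omega⟩
      rw [mC] at this
      intro y hy
      rw [mB] at hy; rw [mC]; omega
    · -- the last point of `B` lies in `C`, hence in `A`
      left
      obtain ⟨x, hx⟩ := exists_val_eq lam (s B) (show B.ncard - 1 < n by omega)
      have : x ∈ A := hs ⟨by rw [mC]; omega, by rw [mB]; omega⟩
      rw [mA] at this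
      intro y hy
      rw [mB] at hy; rw [mA]; omega
  · rintro (hs | hs)
    · -- the point before `B` does not lie in `C`
      left
      obtain ⟨x, hx⟩ := exists_val_eq lam (s B) (show n - 1 < n by omega)
      intro y hy
      by_contra hyB
      rw [mA] at hy; rw [mB] at hyB
      have hv := ZMod.val_lt (lam y - s B)
      have : x ∈ C := hs ⟨by rw [mA]; omega, by rw [mB]; omega⟩
      rw [mC] at this
      omega
    · -- the point after `B` does not lie in `A`
      right
      obtain ⟨x, hx⟩ := exists_val_eq lam (s B) (show B.ncard < n by omega)
      intro y hy
      by_contra hyB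
      rw [mC] at hy; rw [mB] at hyB
      have : x ∈ A := hs ⟨by rw [mC]; omega, by rw [mB]; omega⟩
      rw [mA] at this
      omega

/-- Two sets on the same side of `B` cannot be nested with `B` strictly in between: the smaller
one would share with the larger one neither its start nor its end. -/
lemma no_chain_same_side [Finite V] (h : StartRep n H lam s) (hA : A ∈ H) (hB : B ∈ H)
    (hC : C ∈ H) (f : Fwd s A B) (g : Fwd s C B) (hAB : A ⊆ B) (hBC : B ⊆ C) (hne : A ≠ B)
    (hne' : C ≠ B) : False := by
  rcases h.tight C hC A hA (hAB.trans hBC) with e | e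
  · apply hne'
    refine Fwd.antisymm h hC hB g ?_
    -- `B` starts where `A` does, hence where `C` does
    have vA := Fwd.val_eq h hA hB f
    have hz : (A \ B).ncard = 0 := by rw [Set.sdiff_eq_empty.2 hAB, Set.ncard_empty]
    have e2 : s B = s A := by rwa [hz, ZMod.val_eq_zero, sub_eq_zero] at vA
    have hle := Set.ncard_le_ncard hBC
    have := h.pos B hB
    have := h.lt C hC
    refine ⟨?_, ?_, ?_⟩ <;> rw [e2, e] <;> simp <;> omega
  · apply hne
    -- `B` ends where `C` does, hence where `A` does, and it also starts where `A` does
    have vA := Fwd.val_eq h hA hB f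
    have hz : (A \ B).ncard = 0 := by rw [Set.sdiff_eq_empty.2 hAB, Set.ncard_empty]
    have e2 : s B = s A := by rwa [hz, ZMod.val_eq_zero, sub_eq_zero] at vA
    have vC := Fwd.val_eq h hC hB g
    rw [Set.ncard_sdiff hBC] at vC
    have hle := Set.ncard_le_ncard hBC
    have e3 : s B - s C = (C.ncard : ZMod n) - (B.ncard : ZMod n) := by
      rw [← Nat.cast_sub hle, ← vC]; simp
    have e4 : (A.ncard : ZMod n) = (B.ncard : ZMod n) := by
      linear_combination -e + e2 - e3
    have e5 := congrArg ZMod.val e4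
    rw [ZMod.val_natCast_of_lt (h.lt A hA), ZMod.val_natCast_of_lt (h.lt B hB)] at e5
    exact Set.eq_of_subset_of_ncard_le hAB (by omega)

end

lemma fwd_conflict {V : Type*} [Finite V] {n : ℕ} [NeZero n] {H : Set (Set V)}
    {lam mu : V ≃ ZMod n} {s t : Set V → ZMod n} {A B C : Set V}
    (h : StartRep n H lam s) (h' : StartRep n H mu t) (hA : A ∈ H) (hB : B ∈ H) (hC : C ∈ H)
    (hAB : A ≠ B) (hCB : C ≠ B) (f : Fwd s A B) (g : Fwd s B C) (f' : Fwd t A B)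
    (g' : Fwd t C B) : False := by
  obtain ⟨c1, c2⟩ := comparable_of_same_side h' hA hB hC f' g'
  obtain ⟨d1, d2⟩ := nested_of_opposite_sides h hA hB hC f g
  rcases d1 c1 with i | i <;> rcases d2 c2 with j | j
  · exact hAB (j.antisymm i)
  · exact no_chain_same_side h' hC hB hA g' f' j i hCB hAB
  · exact no_chain_same_side h' hA hB hC f' g' j i hAB hCB
  · exact hCB (j.antisymm i)

/-! ### Global agreement -/

/-- `s` and `t` orient the pair `A`, `B` in the same way. -/
def SameDir {V : Type*} {n : ℕ} (s t : Set V → ZMod n) (A B : Set V) : Prop :=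
  (Fwd s A B ∧ Fwd t A B) ∨ (Fwd s B A ∧ Fwd t B A)

/-- `s` and `t` orient the pair `A`, `B` in opposite ways. -/
def OppDir {V : Type*} {n : ℕ} (s t : Set V → ZMod n) (A B : Set V) : Prop :=
  (Fwd s A B ∧ Fwd t B A) ∨ (Fwd s B A ∧ Fwd t A B)

section
set_option linter.unusedSectionVars false
variable {V : Type*} [Finite V] {n : ℕ} [NeZero n] {H : Set (Set V)}
  {lam mu : V ≃ ZMod n} {s t : Set V → ZMod n}

lemma agree_or_oppose (h : StartRep n H lam s) (h' : StartRep n H mu t) {B : Set V} (hB : B ∈ H) :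
    (∀ C ∈ H, StrictMeet B C → SameDir s t B C) ∨
    (∀ C ∈ H, StrictMeet B C → OppDir s t B C) := by
  by_contra! hcon
  obtain ⟨⟨C, hC, mC, nC⟩, ⟨D, hD, mD, nD⟩⟩ := hcon
  have hCB : C ≠ B := by
    rintro rfl
    exact nC (Or.inl ⟨Fwd.refl h hC, Fwd.refl h' hC⟩)
  have hDB : D ≠ B := by
    rintro rfl
    exact nD (Or.inl ⟨Fwd.refl h hD, Fwd.refl h' hD⟩)
  have oC : OppDir s t B C := by
    have := fwd_or_fwd h hB hC mC
    have := fwd_or_fwd h' hB hC mC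
    unfold OppDir; unfold SameDir at nC; tauto
  have sD : SameDir s t B D := by
    have := fwd_or_fwd h hB hD mD
    have := fwd_or_fwd h' hB hD mD
    unfold SameDir; unfold OppDir at nD; tauto
  rcases oC with ⟨c1, c2⟩ | ⟨c1, c2⟩ <;> rcases sD with ⟨d1, d2⟩ | ⟨d1, d2⟩
  · exact fwd_conflict h'.reflect h.reflect hD hB hC hDB hCB d2.reflect c2.reflect d1.reflect
      c1.reflect
  · exact fwd_conflict h h' hD hB hC hDB hCB d1 c1 d2 c2
  · exact fwd_conflict h.reflect h'.reflect hD hB hC hDB hCB d1.reflect c1.reflect d2.reflect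
      c2.reflect
  · exact fwd_conflict h' h hD hB hC hDB hCB d2 c2 d1 c1

lemma SameDir.offset (h : StartRep n H lam s) (h' : StartRep n H mu t) {A B : Set V}
    (hA : A ∈ H) (hB : B ∈ H) (hd : SameDir s t A B) : t B - s B = t A - s A := by
  rcases hd with ⟨f, g⟩ | ⟨f, g⟩
  · have := ZMod.val_injective n ((f.val_eq h hA hB).trans (g.val_eq h' hA hB).symm)
    linear_combination -this
  · have := ZMod.val_injective n ((f.val_eq h hB hA).trans (g.val_eq h' hB hA).symm)
    linear_combination this

lemma SameDir.not_opp (h : StartRep n H lam s) (h' : StartRep n H mu t) {A B : Set V}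
    (hA : A ∈ H) (hB : B ∈ H) (hne : A ≠ B) (hd : SameDir s t A B) : ¬ OppDir s t B A := by
  have i1 : Fwd s A B → ¬ Fwd s B A := fun f g => hne (f.antisymm h hA hB g)
  have i2 : Fwd t A B → ¬ Fwd t B A := fun f g => hne (f.antisymm h' hA hB g)
  unfold OppDir; unfold SameDir at hd; tauto

/-- Agreement of the orientations at one hyperedge spreads along strict intersections, so that a
single rotation relates all starting points. -/
lemma rotation_of_agree (h : StartRep n H lam s) (h' : StartRep n H mu t) {A₀ : Set V}
    (hc : ∀ B ∈ H, Relation.ReflTransGen (fun X Y => X ∈ H ∧ Y ∈ H ∧ StrictMeet X Y) A₀ B)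
    (hg : ∀ C ∈ H, StrictMeet A₀ C → SameDir s t A₀ C) :
    ∀ B ∈ H, t B - s B = t A₀ - s A₀ := by
  have key : ∀ B, Relation.ReflTransGen (fun X Y => X ∈ H ∧ Y ∈ H ∧ StrictMeet X Y) A₀ B →
      (∀ C ∈ H, StrictMeet B C → SameDir s t B C) ∧ t B - s B = t A₀ - s A₀ := by
    intro B hB
    induction hB with
    | refl => exact ⟨hg, rfl⟩
    | @tail X Y _ hXY ih =>
      obtain ⟨hX, hY, m⟩ := hXY
      have hd := ih.1 Y hY m
      refine ⟨?_, (hd.offset h h' hX hY).trans ih.2⟩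
      by_cases e : X = Y
      · exact e ▸ ih.1
      · refine (agree_or_oppose h h' hY).resolve_right fun ho => ?_
        refine hd.not_opp h h' hX hY e (ho X hX ⟨?_, ?_⟩)
        · rw [Set.inter_comm]; exact m.1
        · rw [Set.union_comm]; have := m.2; tauto
  exact fun B hB => (key B (hc B hB)).2

lemma twin_perm_of_rotation (h : StartRep n H lam s) (h' : StartRep n H mu t) {r : ZMod n}
    (hr : ∀ B ∈ H, t B - s B = r) :
    ∃ π : Equiv.Perm V, (∀ x, ∀ A ∈ H, x ∈ A ↔ π x ∈ A) ∧ ∀ x, mu x = lam (π x) + r := by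
  refine ⟨(mu.trans (Equiv.subRight r)).trans lam.symm, ?_, ?_⟩
  · intro x A hA
    rw [h'.mem A hA, h.mem A hA, ← hr A hA]
    simp only [Equiv.trans_apply, Equiv.apply_symm_apply, Equiv.subRight_apply]
    rw [show mu x - (t A - s A) - s A = mu x - t A by ring]
  · intro x
    simp

end

/-- A strictly connected circular-arc hypergraph has, up to a symmetry
of the circle (rotation or reflection) and a permutation of twins, a unique tight arc
representation. -/
theorem stmt8 {V : Type*} [Fintype V] (H : Set (Set V))
    (hconn : StrictlyConnectedHypergraph H)
    (lam lam' : V ≃ ZMod (Fintype.card V))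
    (h1 : IsTightArcRep (Fintype.card V) H lam)
    (h2 : IsTightArcRep (Fintype.card V) H lam') :
    ∃ π : Equiv.Perm V, (∀ x, ∀ A ∈ H, x ∈ A ↔ π x ∈ A) ∧
      ∃ s : ZMod (Fintype.card V),
        (∀ x, lam' x = lam (π x) + s) ∨ (∀ x, lam' x = s - lam (π x)) := by
  obtain ⟨hiso, h0, hU, hc⟩ := hconn
  have hcard : Fintype.card V ≠ 0 := by
    intro h
    have : IsEmpty V := Fintype.card_eq_zero_iff.1 h
    exact this.elim (lam.symm 0)
  have : NeZero (Fintype.card V) := ⟨hcard⟩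
  obtain ⟨s, hs⟩ := exists_startRep h0 hU rfl h1
  obtain ⟨t, ht⟩ := exists_startRep h0 hU rfl h2
  obtain ⟨A₀, hA₀, -⟩ := hiso (lam.symm 0)
  rcases agree_or_oppose hs ht hA₀ with hg | hg
  · obtain ⟨π, hπ, e⟩ := twin_perm_of_rotation hs ht
      (rotation_of_agree hs ht (hc A₀ hA₀) hg)
    exact ⟨π, hπ, _, Or.inl e⟩
  · have hg' : ∀ C ∈ H, StrictMeet A₀ C → SameDir s (reflStart t) A₀ C := fun C hC m =>
      (hg C hC m).imp (fun f => ⟨f.1, f.2.reflect⟩) (fun f => ⟨f.1, f.2.reflect⟩)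
    obtain ⟨π, hπ, e⟩ := twin_perm_of_rotation hs ht.reflect
      (rotation_of_agree hs ht.reflect (hc A₀ hA₀) hg')
    refine ⟨π, hπ, -(reflStart t A₀ - s A₀), Or.inr fun x => ?_⟩
    have := e x
    simp only [Equiv.trans_apply, Equiv.neg_apply] at this
    linear_combination -this
end

section
/- Let ℓ be a proper interval representation of a finite simple graph G, i.e., ℓ assigns to each vertex a nonempty interval of integers, the intervals are pairwise incomparable under inclusion, and distinct vertices u, v are adjacent iff ℓ(u) ∩ ℓ(v) ≠ ∅. Define a linear order on V(G) by u < v iff min ℓ(u) < min ℓ(v), or min ℓ(u) = min ℓ(v) and max ℓ(u) < max ℓ(v). Then under this order every closed neighborhood N[w] is an interval, and the resulting interval system (N[w])_{w ∈ V(G)} is tight. -/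
/-!
Since the intervals `[a v, b v]` are pairwise incomparable, left and right endpoints are sorted
in the same way: `a u ≤ a v ↔ b u ≤ b v` (`right_le_right_iff`), and `a` is injective. So the
geometric order is simply comparison of left endpoints, and `x ∈ N[w]` means `a x ≤ b w` and
`a w ≤ b x` (`mem_closedNbhd_iff`); both inequalities pass to any vertex between two members
of `N[w]`.

For tightness, let `u ∈ N[w]`. If `a u ≤ a w`, the minimum `m` of `N[w]` satisfies
`a m ≤ a u ≤ b u` and `a u ≤ a w ≤ b m`, so `m ∈ N[u]`. Symmetrically, if `a w ≤ a u`, the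
maximum of `N[w]` lies in `N[u]`.
-/

open Set

section ProperInterval

variable {V : Type*} {a b : V → ℤ}

lemma left_injective
    (hinc : ∀ u v, u ≠ v → ¬ Set.Icc (a u) (b u) ⊆ Set.Icc (a v) (b v)) :
    Function.Injective a := by
  intro u v h
  by_contra hne
  rcases le_total (b u) (b v) with hb | hb
  · exact hinc u v hne (Set.Icc_subset_Icc h.ge hb)
  · exact hinc v u (Ne.symm hne) (Set.Icc_subset_Icc h.le hb)

lemma right_le_right_iff
    (hinc : ∀ u v, u ≠ v → ¬ Set.Icc (a u) (b u) ⊆ Set.Icc (a v) (b v)) (u v : V) :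
    b u ≤ b v ↔ a u ≤ a v := by
  by_cases hne : u = v
  · simp [hne]
  constructor <;> intro h <;> by_contra! hlt
  · exact hinc u v hne (Set.Icc_subset_Icc hlt.le h)
  · exact hinc v u (Ne.symm hne) (Set.Icc_subset_Icc h hlt.le)

lemma geometric_le_iff
    (hinc : ∀ u v, u ≠ v → ¬ Set.Icc (a u) (b u) ⊆ Set.Icc (a v) (b v)) (u v : V) :
    (a u < a v ∨ (a u = a v ∧ b u ≤ b v)) ↔ a u ≤ a v := by
  have := right_le_right_iff hinc u v
  omega

lemma mem_closedNbhd_iff {G : SimpleGraph V} (hab : ∀ v, a v ≤ b v)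
    (hadj : ∀ u v, u ≠ v →
      (G.Adj u v ↔ (Set.Icc (a u) (b u) ∩ Set.Icc (a v) (b v)).Nonempty)) (x w : V) :
    x ∈ ClosedNbhd G w ↔ a x ≤ b w ∧ a w ≤ b x := by
  by_cases hne : x = w
  · subst hne
    simp [ClosedNbhd, hab x]
  · have hx := hab x
    have hw := hab w
    simp only [ClosedNbhd, Set.mem_ofPred_eq, hne, false_or, hadj x w hne, Set.Icc_inter_Icc,
      Set.nonempty_Icc]
    omega

end ProperInterval

/-- The geometric order induced on `V(G)` by a proper interval
representation of `G` (intervals `[a v, b v]`) is a linear order making every closed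
neighborhood an interval, and the resulting interval system is tight. -/
theorem stmt9 {V : Type*} [Fintype V] (G : SimpleGraph V) (a b : V → ℤ)
    (hab : ∀ v, a v ≤ b v)
    (hinc : ∀ u v, u ≠ v → ¬ Set.Icc (a u) (b u) ⊆ Set.Icc (a v) (b v))
    (hadj : ∀ u v, u ≠ v →
      (G.Adj u v ↔ (Set.Icc (a u) (b u) ∩ Set.Icc (a v) (b v)).Nonempty)) :
    IsLinearOrder V (fun u v => a u < a v ∨ (a u = a v ∧ b u ≤ b v)) ∧
    (∀ w, IsIntervalWrt (fun u v => a u < a v ∨ (a u = a v ∧ b u ≤ b v))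
      (ClosedNbhd G w)) ∧
    (∀ u w, ClosedNbhd G u ⊆ ClosedNbhd G w →
      ((∃ m, m ∈ ClosedNbhd G u ∧ ∀ x ∈ ClosedNbhd G w,
          (a m < a x ∨ (a m = a x ∧ b m ≤ b x))) ∨
       (∃ m, m ∈ ClosedNbhd G u ∧ ∀ x ∈ ClosedNbhd G w,
          (a x < a m ∨ (a x = a m ∧ b x ≤ b m))))) := by
  have hle := geometric_le_iff hinc
  have hright := right_le_right_iff hinc
  have hmem := mem_closedNbhd_iff hab hadj
  simp only [hle]
  refine ⟨?_, ?_, ?_⟩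
  · exact
      { refl := fun u => le_refl (a u)
        trans := fun _ _ _ => le_trans
        antisymm := fun _ _ h h' => left_injective hinc (le_antisymm h h')
        total := fun u v => le_total (a u) (a v) }
  · intro w x y z hxy hyz hx hz
    rw [hmem] at hx hz ⊢
    exact ⟨hyz.trans hz.1, hx.2.trans ((hright x y).2 hxy)⟩
  · intro u w hsub
    have huw : u ∈ ClosedNbhd G w := hsub (Or.inl rfl)
    have hfin : (ClosedNbhd G w).Finite := Set.toFinite _
    rcases le_total (a u) (a w) with h | h
    · left
      obtain ⟨m, hm, hmin⟩ := Set.exists_min_image _ a hfin ⟨u, huw⟩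
      exact ⟨m, (hmem m u).2 ⟨(hmin u huw).trans (hab u), h.trans ((hmem m w).1 hm).2⟩, hmin⟩
    · right
      obtain ⟨m, hm, hmax⟩ := Set.exists_max_image _ a hfin ⟨u, huw⟩
      exact ⟨m, (hmem m u).2 ⟨((hmem m w).1 hm).1.trans ((hright w u).2 h),
        (hmax u huw).trans (hab m)⟩, hmax⟩
end

section
/- Let G be a finite simple graph whose complement is not bipartite and whose closed neighborhood hypergraph N[G] is a circular-arc hypergraph. Then G has no universal vertex, i.e., no vertex v with N[v] = V(G). -/
/-!
Let `u` be a universal vertex and read the circular order as a linear order starting at `u`.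
Every closed neighborhood `N[v]` is an arc through both `u` and `v`, so it contains all vertices
from `u` up to `v`, or all vertices from `v` to the end (`IsArc.initial_or_final`). Any two vertices
of the first kind are adjacent, because the later one sees the earlier one; symmetrically for any
two vertices of the second kind. Hence `V` is covered by two cliques of `G`, which is to say that
the complement of `G` is bipartite.
-/

open Set

/-- An arc through `p` and `x` contains one of the two arcs between `p` and `x`. Points are compared
by their distance from `p` in the positive direction, i.e. `(y - p).val`. -/
lemma IsArc.initial_or_final {n : ℕ} [NeZero n] {S : Set (ZMod n)} (hS : IsArc n S)
    {p x : ZMod n} (hp : p ∈ S) (hx : x ∈ S) :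
    (∀ y, (y - p).val ≤ (x - p).val → y ∈ S) ∨ (∀ y, (x - p).val ≤ (y - p).val → y ∈ S) := by
  obtain ⟨a, k, hk, rfl⟩ := hS
  obtain ⟨i, hi, rfl⟩ := hp
  obtain ⟨j, hj, rfl⟩ := hx
  rcases le_or_gt i j with hij | hij
  · left
    intro y hy
    have hval : (a + (j : ZMod n) - (a + (i : ZMod n))).val = j - i := by
      have h : a + (j : ZMod n) - (a + (i : ZMod n)) = ((j - i : ℕ) : ZMod n) := by
        rw [Nat.cast_sub hij]; ring
      rw [h, ZMod.val_natCast_of_lt (by omega)]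
    refine ⟨i + (y - (a + (i : ZMod n))).val, by omega, ?_⟩
    rw [Nat.cast_add, ZMod.natCast_zmod_val]; ring
  · right
    intro y hy
    -- Going from `p = a + i` to `x = a + j` with `j < i` wraps around the circle.
    have hval : (a + (j : ZMod n) - (a + (i : ZMod n))).val = n + j - i := by
      have h : a + (j : ZMod n) - (a + (i : ZMod n)) = ((n + j - i : ℕ) : ZMod n) := by
        rw [Nat.cast_sub (by omega), Nat.cast_add, ZMod.natCast_self]; ring
      rw [h, ZMod.val_natCast_of_lt (by omega)]
    have hlt := ZMod.val_lt (y - (a + (i : ZMod n)))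
    refine ⟨i + (y - (a + (i : ZMod n))).val - n, by omega, ?_⟩
    rw [Nat.cast_sub (by omega), Nat.cast_add, ZMod.natCast_zmod_val, ZMod.natCast_self]; ring

/-- A graph with non-bipartite complement whose closed neighborhood
hypergraph is a circular-arc hypergraph has no universal vertex. -/
theorem stmt10 {V : Type*} [Fintype V] (G : SimpleGraph V)
    (hnb : ¬ IsBipartite Gᶜ)
    (hca : ∃ f : V ≃ ZMod (Fintype.card V),
      ∀ v, IsArc (Fintype.card V) (f '' ClosedNbhd G v)) :
    ¬ ∃ v : V, ClosedNbhd G v = Set.univ := by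
  rintro ⟨u, hu⟩
  obtain ⟨f, hf⟩ := hca
  have : Nonempty V := ⟨u⟩
  have huniv : ∀ v, u ∈ ClosedNbhd G v := by
    intro v
    have hv : v ∈ ClosedNbhd G u := hu ▸ Set.mem_univ v
    exact hv.imp Eq.symm fun h => h.symm
  have key : ∀ v,
      (∀ w, (f w - f u).val ≤ (f v - f u).val → w ∈ ClosedNbhd G v) ∨
      (∀ w, (f v - f u).val ≤ (f w - f u).val → w ∈ ClosedNbhd G v) := by
    intro v
    refine ((hf v).initial_or_final (Set.mem_image_of_mem f (huniv v))
      (Set.mem_image_of_mem f (Or.inl rfl))).imp ?_ ?_ <;>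
    exact fun h w hw => f.injective.mem_set_image.1 (h (f w) hw)
  refine hnb ⟨{v | ∀ w, (f w - f u).val ≤ (f v - f u).val → w ∈ ClosedNbhd G v}, ?_, ?_⟩
  · intro v hv w hw hvw
    rw [SimpleGraph.compl_adj] at hvw
    rcases le_total (f v - f u).val (f w - f u).val with h | h
    · exact (hw v h).elim hvw.1 hvw.2
    · exact (hv w h).elim (fun e => hvw.1 e.symm) (fun e => hvw.2 e.symm)
  · intro v hv w hw hvw
    rw [SimpleGraph.compl_adj] at hvw
    have hv' := (key v).resolve_left hv
    have hw' := (key w).resolve_left hw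
    rcases le_total (f v - f u).val (f w - f u).val with h | h
    · exact (hv' w h).elim (fun e => hvw.1 e.symm) (fun e => hvw.2 e.symm)
    · exact (hw' v h).elim hvw.1 hvw.2
end

section
/- Let G be a finite simple graph on n vertices whose complement is not bipartite, and let f : V(G) → ZMod n be a bijection under which every closed neighborhood N[v] is an arc. For each vertex v write f(N[v]) = [v⁻, v⁺] (a proper nonempty arc, since no vertex is universal), and set N⁻[v] = {u ∈ N[v] : f(u) lies in the arc [v⁻, f(v)]} and N⁺[v] = {u ∈ N[v] : f(u) lies in the arc [f(v), v⁺]}. Then: (1) for all vertices u, v, u ∈ N⁻[v] if and only if v ∈ N⁺[u]; (2) for every v, both N⁻[v] and N⁺[v] are cliques of G. -/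
/-!
An arc `S` containing `x` and `y` contains the arc `[x, y]` or the arc `[y, x]`, and only one of
them if `S` is proper and `x ≠ y`. Hence, for `u ∈ N[v]`, the condition `f u ∈ [v⁻, f v]` says
exactly that `[f u, f v] ⊆ f(N[v])`, and `f u ∈ [f v, v⁺]` says that `[f v, f u] ⊆ f(N[v])`
(`mem_lo_iff`, `mem_hi_iff`).

Assertion (1) thus reads: for adjacent `u`, `v`, the arc `[u, v]` lies in `N[v]` iff it lies in
`N[u]`. If this fails, then either `[u, v] ⊆ N[v]` and `[v, u] ⊆ N[u]`, or the mirror image of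
this holds: `[u, v] ⊆ N[u]` and `[v, u] ⊆ N[v]`. In the first situation the
circle is a union of two cliques: one consists of the `w ∈ [u, v)` with `[v, w] ⊆ N[w]` together
with the `w ∈ [v, u)` such that `[u, w] ⊄ N[w]`, and its complement is the set obtained by
exchanging the roles of `u` and `v` (`half_isClique`). The second situation reduces to the first by
the reflection `x ↦ -x` (`exists_cliques_mirror`). So the complement of `G` would be bipartite.

For (2), let `u, w ∈ N⁺[v]` with `u ∈ [v, w]`. By (1), `v ∈ N⁻[w]`, so `u ∈ [v, w] ⊆ N[w]`.
The argument for `N⁻[v]` is the mirror image.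
-/

open Set

/-- The arc of `ZMod n` running clockwise from `x` to `y`. -/
def CircArc (n : ℕ) (x y : ZMod n) : Set (ZMod n) :=
  {z | (z - x).val ≤ (y - x).val}

/-! ### Arcs and their endpoints -/

section Arcs

variable {n : ℕ} [NeZero n]

lemma val_sub_base (c x z : ZMod n) :
    (z - x).val = if (x - c).val ≤ (z - c).val then (z - c).val - (x - c).val
      else (z - c).val + n - (x - c).val := by
  have h : (z - c).val = ((z - x).val + (x - c).val) % n := by
    rw [← ZMod.val_add]; congr 1; ring
  have h1 := ZMod.val_lt (z - x)
  have h2 := ZMod.val_lt (x - c)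
  rcases lt_or_ge ((z - x).val + (x - c).val) n with h3 | h3
  · rw [Nat.mod_eq_of_lt h3] at h
    split_ifs <;> omega
  · rw [Nat.mod_eq_sub_mod h3, Nat.mod_eq_of_lt (by omega)] at h
    split_ifs <;> omega

/-- Membership in an arc, read off from the clockwise distances to an arbitrary base point `c`. -/
lemma mem_circArc_iff (c x y z : ZMod n) :
    z ∈ CircArc n x y ↔
      if (x - c).val ≤ (y - c).val then (x - c).val ≤ (z - c).val ∧ (z - c).val ≤ (y - c).val
      else (x - c).val ≤ (z - c).val ∨ (z - c).val ≤ (y - c).val := by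
  unfold CircArc
  rw [mem_ofPred_eq, val_sub_base c x z, val_sub_base c x y]
  have h1 := ZMod.val_lt (z - c)
  have h2 := ZMod.val_lt (x - c)
  have h3 := ZMod.val_lt (y - c)
  split_ifs <;> omega

lemma eq_of_val_sub_eq {c x y : ZMod n} (h : (x - c).val = (y - c).val) : x = y :=
  sub_left_injective (ZMod.val_injective n h)

/-- Any two points of `S` are joined inside `S` by one of the two arcs between them. -/
def ArcJoined (S : Set (ZMod n)) : Prop :=
  ∀ x ∈ S, ∀ y ∈ S, CircArc n x y ⊆ S ∨ CircArc n y x ⊆ S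

lemma IsArc.arcJoined {S : Set (ZMod n)} (h : IsArc n S) : ArcJoined S := by
  obtain ⟨a, k, hk, rfl⟩ := h
  have key : ∀ x : ZMod n, x ∈ {x | ∃ i : ℕ, i < k ∧ x = a + (i : ZMod n)} ↔
      (x - a).val < k := by
    intro x
    constructor
    · rintro ⟨i, hi, rfl⟩
      rw [add_sub_cancel_left, ZMod.val_natCast, Nat.mod_eq_of_lt (by omega)]
      exact hi
    · intro hx
      exact ⟨_, hx, by rw [ZMod.natCast_zmod_val]; ring⟩
  intro x hx y hy
  rw [key] at hx hy
  rcases le_total (x - a).val (y - a).val with h | h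
  · left
    intro z hz
    rw [mem_circArc_iff a, if_pos h] at hz
    rw [key]; omega
  · right
    intro z hz
    rw [mem_circArc_iff a, if_pos h] at hz
    rw [key]; omega

lemma val_neg_one_add : (-1 : ZMod n).val + 1 = n := by
  obtain ⟨m, rfl⟩ := Nat.exists_eq_succ_of_ne_zero (NeZero.ne n)
  rw [ZMod.val_neg_one]

/-- If `l` is the start point of `S`, then `[l, y]` contains `x` iff `S` contains `[x, y]`. -/
lemma mem_lo_iff {S : Set (ZMod n)} (hS : ArcJoined S) {l x y : ZMod n}
    (hl : l ∈ S) (hl' : l - 1 ∉ S) (hy : y ∈ S) :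
    x ∈ CircArc n l y ↔ CircArc n x y ⊆ S := by
  have hp : (l - 1 - l).val + 1 = n := by
    rw [show l - 1 - l = -1 by ring]; exact val_neg_one_add
  have h0 : (l - l).val = 0 := by simp
  have hvx := ZMod.val_lt (x - l)
  have hvy := ZMod.val_lt (y - l)
  rw [mem_circArc_iff l, h0, if_pos (Nat.zero_le _)]
  constructor
  · rintro ⟨-, hxy⟩ z hz
    rw [mem_circArc_iff l, if_pos hxy] at hz
    rcases hS l hl y hy with h | h
    · apply h
      rw [mem_circArc_iff l, h0, if_pos (Nat.zero_le _)]
      omega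
    · rcases Nat.eq_zero_or_pos (y - l).val with h2 | h2
      · have : z = l := eq_of_val_sub_eq (c := l) (by omega)
        rwa [this]
      · refine absurd (h ?_) hl'
        rw [mem_circArc_iff l, h0, if_neg (by omega)]
        omega
  · intro h
    by_contra hc
    apply hl'
    apply h
    rw [mem_circArc_iff l, if_neg (by omega)]
    omega

/-- If `e` is the end point of `S`, then `[x, e]` contains `y` iff `S` contains `[x, y]`. -/
lemma mem_hi_iff {S : Set (ZMod n)} (hS : ArcJoined S) {e x y : ZMod n}
    (he : e ∈ S) (he' : e + 1 ∉ S) (hx : x ∈ S) :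
    y ∈ CircArc n x e ↔ CircArc n x y ⊆ S := by
  have hp : (e - (e + 1)).val + 1 = n := by
    rw [show e - (e + 1) = -1 by ring]; exact val_neg_one_add
  have h0 : (e + 1 - (e + 1)).val = 0 := by simp
  have hvx := ZMod.val_lt (x - (e + 1))
  have hvy := ZMod.val_lt (y - (e + 1))
  rw [mem_circArc_iff (e + 1), if_pos (by omega)]
  constructor
  · rintro ⟨hxy, -⟩ z hz
    have hvz := ZMod.val_lt (z - (e + 1))
    rw [mem_circArc_iff (e + 1), if_pos hxy] at hz
    rcases hS x hx e he with h | h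
    · apply h
      rw [mem_circArc_iff (e + 1), if_pos (by omega)]
      omega
    · by_cases h2 : (x - (e + 1)).val + 1 = n
      · have : z = e := eq_of_val_sub_eq (c := e + 1) (by omega)
        rwa [this]
      · refine absurd (h ?_) he'
        rw [mem_circArc_iff (e + 1), h0, if_neg (by omega)]
        omega
  · intro h
    by_contra hc
    apply he'
    apply h
    rw [mem_circArc_iff (e + 1), if_neg (by omega), h0]
    omega

/-- One of two points in an arc `[x, y]` comes first: it lies in the arc from `x` to the other, and
the other lies in the arc from it to `y`. -/
lemma circArc_order {x y z w : ZMod n} (hz : z ∈ CircArc n x y) (hw : w ∈ CircArc n x y) :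
    (z ∈ CircArc n x w ∧ w ∈ CircArc n z y) ∨ (w ∈ CircArc n x z ∧ z ∈ CircArc n w y) := by
  have h0 : (x - x).val = 0 := by simp
  rw [mem_circArc_iff x, h0, if_pos (Nat.zero_le _)] at hz hw
  simp only [mem_circArc_iff x, h0, if_pos (Nat.zero_le _), if_pos hz.2, if_pos hw.2]
  omega

/-! ### Covering the circle by two cliques -/

/-- For `N` a system of neighborhoods on the circle and points `u`, `v`: the points `w` of `[u, v)`
with `[v, w] ⊆ N w`, together with the points `w` of `[v, u)` such that `[u, w] ⊄ N w`. -/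
def half (N : ZMod n → Set (ZMod n)) (u v : ZMod n) : Set (ZMod n) :=
  {w | ((w - u).val < (v - u).val ∧ CircArc n v w ⊆ N w) ∨
    ((v - u).val ≤ (w - u).val ∧ ¬ CircArc n u w ⊆ N w)}

lemma compl_half_subset (N : ZMod n → Set (ZMod n)) {u v : ZMod n} (huv : u ≠ v) {w : ZMod n}
    (hw : w ∉ half N u v) : w ∈ half N v u := by
  have hne : (v - u).val ≠ 0 := fun h => huv (eq_of_val_sub_eq (c := u) (by simp [h]))
  have h0 : (u - u).val = 0 := by simp
  have h1 := ZMod.val_lt (w - u)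
  have h2 := ZMod.val_lt (v - u)
  simp only [half, mem_ofPred_eq, val_sub_base u v w, val_sub_base u v u, h0] at hw ⊢
  rw [if_neg (by omega : ¬ (v - u).val ≤ 0)]
  by_cases h : (v - u).val ≤ (w - u).val
  · left
    rw [if_pos h]
    exact ⟨by omega, by by_contra hc; exact hw (Or.inr ⟨h, hc⟩)⟩
  · right
    rw [if_neg h]
    exact ⟨by omega, fun hc => hw (Or.inl ⟨by omega, hc⟩)⟩

/-- If `[v, u] ⊆ N u`, then any two points of `half N u v` are adjacent. A point `w` of `[v, u)`
that lies in it satisfies `[w, u] ⊆ N w`, since `w` and `u` are adjacent. -/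
lemma half_isClique {N : ZMod n → Set (ZMod n)} (hsymm : ∀ x y, x ∈ N y → y ∈ N x)
    (hrefl : ∀ x, x ∈ N x) (hN : ∀ x, ArcJoined (N x)) {u v : ZMod n} (huv : u ≠ v)
    (hvu : CircArc n v u ⊆ N u) {w z : ZMod n} (hw : w ∈ half N u v) (hz : z ∈ half N u v) :
    w ∈ N z := by
  have hne : (v - u).val ≠ 0 := fun h => huv (eq_of_val_sub_eq (c := u) (by simp [h]))
  have h0 : (u - u).val = 0 := by simp
  -- It suffices to treat the pairs in which `w` does not lie after `z` on the way from `u`.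
  wlog hle : (w - u).val ≤ (z - u).val generalizing w z
  · exact hsymm _ _ (this hz hw (by omega))
  rcases hw with ⟨hw1, hw2⟩ | ⟨hw1, hw2⟩
  · rcases hz with ⟨hz1, hz2⟩ | ⟨hz1, hz2⟩
    · apply hz2
      rw [mem_circArc_iff u, if_neg (by omega)]
      omega
    · apply hsymm
      apply hw2
      rw [mem_circArc_iff u, if_neg (by omega)]
      omega
  · have hwu : w ∈ N u := by
      apply hvu
      rw [mem_circArc_iff u, h0, if_neg (by omega)]
      omega
    have h : CircArc n w u ⊆ N w :=
      (hN w u (hsymm _ _ hwu) w (hrefl w)).resolve_left hw2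
    apply hsymm
    apply h
    rw [mem_circArc_iff u, h0, if_neg (by omega)]
    omega

/-- If `[u, v] ⊆ N v` and `[v, u] ⊆ N u`, the circle is covered by the cliques `half N u v` and `half N v u`. -/
lemma exists_cliques {N : ZMod n → Set (ZMod n)} (hsymm : ∀ x y, x ∈ N y → y ∈ N x)
    (hrefl : ∀ x, x ∈ N x) (hN : ∀ x, ArcJoined (N x)) {u v : ZMod n} (huv : u ≠ v)
    (h1 : CircArc n u v ⊆ N v) (h2 : CircArc n v u ⊆ N u) :
    ∃ U : Set (ZMod n), (∀ w ∈ U, ∀ z ∈ U, w ∈ N z) ∧ (∀ w ∉ U, ∀ z ∉ U, w ∈ N z) :=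
  ⟨half N u v, fun _ hw _ hz => half_isClique hsymm hrefl hN huv h2 hw hz,
    fun _ hw _ hz => half_isClique hsymm hrefl hN huv.symm h1
      (compl_half_subset N huv hw) (compl_half_subset N huv hz)⟩

lemma neg_mem_circArc_neg {x y z : ZMod n} :
    -z ∈ CircArc n (-x) (-y) ↔ z ∈ CircArc n y x := by
  unfold CircArc
  have h := val_sub_base 0 (z - y) (x - y)
  have h1 := ZMod.val_lt (z - y)
  have h2 := ZMod.val_lt (x - y)
  rw [sub_zero, sub_zero, show x - y - (z - y) = x - z by ring] at h
  rw [mem_ofPred_eq, mem_ofPred_eq, show -z - -x = x - z by ring, show -y - -x = x - y by ring, h]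
  split_ifs <;> omega

/-- The mirror image of `exists_cliques`, obtained from the reflection `x ↦ -x`. -/
lemma exists_cliques_mirror {N : ZMod n → Set (ZMod n)} (hsymm : ∀ x y, x ∈ N y → y ∈ N x)
    (hrefl : ∀ x, x ∈ N x) (hN : ∀ x, ArcJoined (N x)) {u v : ZMod n} (huv : u ≠ v)
    (h1 : CircArc n u v ⊆ N u) (h2 : CircArc n v u ⊆ N v) :
    ∃ U : Set (ZMod n), (∀ w ∈ U, ∀ z ∈ U, w ∈ N z) ∧ (∀ w ∉ U, ∀ z ∉ U, w ∈ N z) := by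
  have hsub : ∀ {x y c : ZMod n}, CircArc n y x ⊆ N c →
      CircArc n (-x) (-y) ⊆ {z | -z ∈ N c} := by
    intro x y c h z hz
    rw [← neg_neg z, neg_mem_circArc_neg] at hz
    exact h hz
  obtain ⟨U, hU, hU'⟩ := exists_cliques (N := fun x => {z | -z ∈ N (-x)}) (u := -u) (v := -v)
    (fun x y h => hsymm _ _ h) (fun x => hrefl _)
    (fun x y hy z hz => by
      rcases hN (-x) _ hy _ hz with h | h
      · right; simpa using hsub h
      · left; simpa using hsub h)
    (by simpa using huv)
    (by simpa using hsub h2) (by simpa using hsub h1)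
  refine ⟨{z | -z ∈ U}, fun w hw z hz => ?_, fun w hw z hz => ?_⟩
  · simpa using hU _ hw _ hz
  · simpa using hU' _ hw _ hz

end Arcs

/-! ### The graph -/

/-- Let `G` have non-bipartite complement, and let `f` be an arc
ordering of `N[G]`, with `lo v`, `hi v` the start and end points of the arc
`f(N[v])`. Define `N⁻[v]` and `N⁺[v]` via these endpoints. Then (1) `u ∈ N⁻[v]` iff
`v ∈ N⁺[u]`, and (2) both `N⁻[v]` and `N⁺[v]` are cliques. -/
theorem stmt12 {V : Type*} [Fintype V] (G : SimpleGraph V)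
    (hnb : ¬ IsBipartite Gᶜ)
    (f : V ≃ ZMod (Fintype.card V))
    (harc : ∀ v, IsArc (Fintype.card V) (f '' ClosedNbhd G v))
    (lo hi : V → ZMod (Fintype.card V))
    (hlo : ∀ v, lo v ∈ f '' ClosedNbhd G v ∧ lo v - 1 ∉ f '' ClosedNbhd G v)
    (hhi : ∀ v, hi v ∈ f '' ClosedNbhd G v ∧ hi v + 1 ∉ f '' ClosedNbhd G v) :
    (∀ u v, (u ∈ ClosedNbhd G v ∧ f u ∈ CircArc (Fintype.card V) (lo v) (f v)) ↔
            (v ∈ ClosedNbhd G u ∧ f v ∈ CircArc (Fintype.card V) (f u) (hi u))) ∧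
    (∀ v, G.IsClique
        {u | u ∈ ClosedNbhd G v ∧ f u ∈ CircArc (Fintype.card V) (lo v) (f v)} ∧
      G.IsClique
        {u | u ∈ ClosedNbhd G v ∧ f u ∈ CircArc (Fintype.card V) (f v) (hi v)}) := by
  classical
  have hne : Nonempty V := by
    by_contra h
    rw [not_nonempty_iff] at h
    exact hnb ⟨∅, fun u => h.elim u, fun u => h.elim u⟩
  have : NeZero (Fintype.card V) := ⟨Fintype.card_ne_zero⟩
  -- The closed neighborhoods, transported to the circle.
  set N : ZMod (Fintype.card V) → Set (ZMod (Fintype.card V)) :=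
    fun x => f '' ClosedNbhd G (f.symm x) with hNdef
  have hmem : ∀ u v, f u ∈ N (f v) ↔ u ∈ ClosedNbhd G v := by
    intro u v
    simp [hNdef]
  have hsymmV : ∀ u v, u ∈ ClosedNbhd G v → v ∈ ClosedNbhd G u := by
    rintro u v (h | h)
    · exact Or.inl h.symm
    · exact Or.inr h.symm
  have hsymm : ∀ x y, x ∈ N y → y ∈ N x := by
    intro x y h
    obtain ⟨u, rfl⟩ := f.surjective x
    obtain ⟨v, rfl⟩ := f.surjective y
    rw [hmem] at h ⊢
    exact hsymmV _ _ h
  have hrefl : ∀ x, x ∈ N x := by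
    intro x
    obtain ⟨u, rfl⟩ := f.surjective x
    rw [hmem]
    exact Or.inl rfl
  have hN : ∀ x, ArcJoined (N x) := fun x => (harc _).arcJoined
  have hNf : ∀ v, f '' ClosedNbhd G v = N (f v) := by
    intro v
    simp [hNdef]
  have hminus : ∀ u v, f u ∈ CircArc (Fintype.card V) (lo v) (f v) ↔
      CircArc _ (f u) (f v) ⊆ N (f v) := by
    intro u v
    have h := hlo v
    rw [hNf] at h
    exact mem_lo_iff (hN _) h.1 h.2 (hrefl _)
  have hplus : ∀ u v, f v ∈ CircArc (Fintype.card V) (f u) (hi u) ↔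
      CircArc _ (f u) (f v) ⊆ N (f u) := by
    intro u v
    have h := hhi u
    rw [hNf] at h
    exact mem_hi_iff (hN _) h.1 h.2 (hrefl _)
  have hkey : ¬ ∃ U : Set (ZMod (Fintype.card V)),
      (∀ w ∈ U, ∀ z ∈ U, w ∈ N z) ∧ (∀ w ∉ U, ∀ z ∉ U, w ∈ N z) := by
    rintro ⟨U, hU, hU'⟩
    have hadj : ∀ a b, f a ∈ N (f b) → ¬ Gᶜ.Adj a b := by
      intro a b hab hc
      rw [SimpleGraph.compl_adj] at hc
      rcases (hmem a b).1 hab with h | h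
      · exact hc.1 h
      · exact hc.2 h
    exact hnb ⟨{w | f w ∈ U}, fun a ha b hb => hadj _ _ (hU _ ha _ hb),
      fun a ha b hb => hadj _ _ (hU' _ ha _ hb)⟩
  have hiff : ∀ u v, u ∈ N v → (CircArc _ u v ⊆ N v ↔ CircArc _ u v ⊆ N u) := by
    intro u v huv
    rcases eq_or_ne u v with rfl | hne
    · rfl
    constructor
    · intro h
      by_contra hc
      exact hkey (exists_cliques hsymm hrefl hN hne h
        ((hN u u (hrefl u) v (hsymm _ _ huv)).resolve_left hc))
    · intro h
      by_contra hc
      exact hkey (exists_cliques_mirror hsymm hrefl hN hne h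
        ((hN v u huv v (hrefl v)).resolve_left hc))
  refine ⟨fun u v => ?_, fun v => ⟨?_, ?_⟩⟩
  · rw [hminus, hplus]
    constructor
    · rintro ⟨h1, h2⟩
      exact ⟨hsymmV _ _ h1, (hiff _ _ ((hmem _ _).2 h1)).1 h2⟩
    · rintro ⟨h1, h2⟩
      exact ⟨hsymmV _ _ h1, (hiff _ _ ((hmem _ _).2 (hsymmV _ _ h1))).2 h2⟩
  · rintro a ⟨ha1, ha2⟩ b ⟨hb1, hb2⟩ hab
    have hA := (hiff _ _ ((hmem _ _).2 ha1)).1 ((hminus _ _).1 ha2)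
    have hB := (hiff _ _ ((hmem _ _).2 hb1)).1 ((hminus _ _).1 hb2)
    have : f a ∈ N (f b) := by
      rcases circArc_order ha2 hb2 with h | h
      · exact hsymm _ _ (hA h.2)
      · exact hB h.2
    exact ((hmem _ _).1 this).resolve_left hab
  · rintro a ⟨ha1, ha2⟩ b ⟨hb1, hb2⟩ hab
    have hA := (hiff _ _ ((hmem _ _).2 (hsymmV _ _ ha1))).2 ((hplus _ _).1 ha2)
    have hB := (hiff _ _ ((hmem _ _).2 (hsymmV _ _ hb1))).2 ((hplus _ _).1 hb2)
    have : f a ∈ N (f b) := by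
      rcases circArc_order ha2 hb2 with h | h
      · exact hB h.1
      · exact hsymm _ _ (hA h.1)
    exact ((hmem _ _).1 this).resolve_left hab
end

section
/- Let G be a finite simple graph admitting a tight interval representation: an injective map ℓ assigning to each vertex a nonempty interval of integers such that the family of intervals is tight (whenever ℓ(u) ⊇ ℓ(w), the two intervals share their minimum or their maximum) and distinct vertices u, v are adjacent iff ℓ(u) ∩ ℓ(v) ≠ ∅. Then G is a proper interval graph. -/
/-!
Tightness says that `a u < a v` forces `b u ≤ b v`, so along the lexicographic order on the pairs
`(a v, b v)` both endpoints are weakly increasing; by injectivity this order on `V` is a linear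
order. Perturbing the left endpoint by the right one and vice versa,
`a' v = M * a v + b v` and `b' v = M * b v + a v + 2 * B`, makes both endpoints strictly
increasing along this order, so no new interval contains another. If `B` bounds all
endpoints in absolute value and `M = 4 * B + 1`, the perturbation is too small to change
which intervals intersect.
-/

open Set

/-- A graph admitting a tight interval representation (an injective
assignment of nonempty integer intervals, tight under inclusion, realizing adjacency
by intersection) is a proper interval graph. -/
theorem stmt14 {V : Type*} [Fintype V] (G : SimpleGraph V) (a b : V → ℤ)
    (hab : ∀ v, a v ≤ b v)
    (hinj : Function.Injective (fun v => Set.Icc (a v) (b v)))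
    (htight : ∀ u v, Set.Icc (a u) (b u) ⊆ Set.Icc (a v) (b v) →
      a u = a v ∨ b u = b v)
    (hadj : ∀ u v, u ≠ v →
      (G.Adj u v ↔ (Set.Icc (a u) (b u) ∩ Set.Icc (a v) (b v)).Nonempty)) :
    IsProperIntervalGraph G := by
  obtain ⟨B, hB⟩ : ∃ B : ℤ, ∀ v, |a v| ≤ B ∧ |b v| ≤ B := by
    refine ⟨∑ v, (|a v| + |b v|), fun v => ?_⟩
    have h := Finset.single_le_sum (f := fun v => |a v| + |b v|)
      (fun i _ => by positivity) (Finset.mem_univ v)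
    have h1 := abs_nonneg (a v)
    have h2 := abs_nonneg (b v)
    constructor <;> linarith
  have hB' : ∀ v, -B ≤ a v ∧ a v ≤ B ∧ -B ≤ b v ∧ b v ≤ B := fun v =>
    ⟨(abs_le.1 (hB v).1).1, (abs_le.1 (hB v).1).2, (abs_le.1 (hB v).2).1, (abs_le.1 (hB v).2).2⟩
  have hmono : ∀ u v, a u < a v → b u ≤ b v := by
    intro u v h
    by_contra! h'
    rcases htight v u (Set.Icc_subset_Icc h.le h'.le) with h1 | h1 <;> omega
  have hne : ∀ u v, u ≠ v → a u = a v → b u ≠ b v := by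
    intro u v huv h h'
    exact huv (hinj (by simp only [h, h']))
  have hinter : ∀ p q r s : ℤ, p ≤ q → r ≤ s →
      ((Set.Icc p q ∩ Set.Icc r s).Nonempty ↔ p ≤ s ∧ r ≤ q) := by
    intro p q r s h1 h2
    rw [Set.Icc_inter_Icc, Set.nonempty_Icc, sup_le_iff, le_inf_iff, le_inf_iff]
    omega
  -- The comparison of a left with a right endpoint is unaffected by the perturbation.
  have hkey : ∀ u v, (4 * B + 1) * a u + b u ≤ (4 * B + 1) * b v + a v + 2 * B ↔
      a u ≤ b v := by
    intro u v
    obtain ⟨h1, h2, h3, h4⟩ := hB' u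
    obtain ⟨h5, h6, h7, h8⟩ := hB' v
    constructor
    · intro h
      by_contra! h'
      nlinarith
    · intro h
      nlinarith
  have hle : ∀ v, (4 * B + 1) * a v + b v ≤ (4 * B + 1) * b v + a v + 2 * B :=
    fun v => (hkey v v).2 (hab v)
  refine ⟨fun v => Set.Icc ((4 * B + 1) * a v + b v) ((4 * B + 1) * b v + a v + 2 * B),
    fun v => ⟨_, _, hle v, rfl⟩, ?_, ?_⟩
  · intro u v huv hsub
    obtain ⟨h1, h2⟩ := (Set.Icc_subset_Icc_iff (hle u)).1 hsub
    have hB0 : 0 ≤ B := (abs_nonneg _).trans (hB u).1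
    rcases lt_trichotomy (a u) (a v) with h | h | h
    · have := hmono u v h
      nlinarith
    · rcases lt_or_gt_of_ne (hne u v huv h) with h' | h'
      · rw [h] at h1
        linarith
      · rw [h] at h2
        nlinarith
    · have := hmono v u h
      nlinarith
  · intro u v huv
    rw [hadj u v huv, hinter _ _ _ _ (hab u) (hab v), hinter _ _ _ _ (hle u) (hle v),
      hkey, hkey]
end

section
/- If G is a connected proper circular-arc graph whose complement is not bipartite, then the closed neighborhood hypergraph N[G] is strictly connected. -/
/-!
Fix a proper circular-arc model and write each arc by its start point and its length.

If two arcs meet, one contains the start point of the other (`ArcModel.adj_iff`), and if the arc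
of `u` contains the start of the arc of `w ≠ u`, then by incomparability the arc of `w` reaches
strictly past the end of the arc of `u` (`ArcModel.len_lt`). Two vertices whose arcs share a point
are never adjacent in the complement, so if there are two points such that each arc contains one
of them, then the complement is bipartite (`ArcModel.bipartite_of_two_points`).

* If `N[v] = V`, every arc contains the start or the end of the arc of `v`.
* Let the arc of `u` contain the start of the arc of `v`, with no other arc starting in between.
  If `N[u] ∪ N[v] = V`, then every arc contains the start of the arc of `u` or the end of the arc
  of `v`.

As the complement is not bipartite, `N[v] = V` never holds, and neither does `N[u] ∪ N[v] = V` for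
such consecutive `u` and `v`, so that `N[u]` and `N[v]` intersect strictly. For arbitrary adjacent `u` and `v`, moving from start to start
gives a chain of strictly intersecting neighborhoods (`ArcModel.chain`, an induction on the
distance of the start points), and connectedness of `G` does the rest.
-/

open Set

/-- A proper circular-arc model of `G` in coordinates: the arc of `v` is
`s v, s v + 1, …, s v + (k v - 1)`. -/
structure ArcModel {V : Type*} (G : SimpleGraph V) (n : ℕ) (s : V → ZMod n) (k : V → ℕ) :
    Prop where
  pos : ∀ v, 0 < k v
  incomp : ∀ u v, u ≠ v → ¬ ∀ i < k u, ∃ j < k v, s u + (i : ZMod n) = s v + (j : ZMod n)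
  adj : ∀ u v, u ≠ v →
    (G.Adj u v ↔ ∃ i < k u, ∃ j < k v, s u + (i : ZMod n) = s v + (j : ZMod n))

/-- The strict intersection relation `⋈*` on the hyperedges of `N[G]`. -/
def StrictRel {V : Type*} (G : SimpleGraph V) (X Y : Set V) : Prop :=
  X ∈ (Set.range fun v => ClosedNbhd G v) ∧ Y ∈ (Set.range fun v => ClosedNbhd G v) ∧
    (X ∩ Y).Nonempty ∧ (X ⊆ Y ∨ Y ⊆ X ∨ X ∪ Y ≠ Set.univ)

theorem StrictRel.symm {V : Type*} {G : SimpleGraph V} {X Y : Set V} (h : StrictRel G X Y) :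
    StrictRel G Y X := by
  obtain ⟨h1, h2, h3, h4⟩ := h
  refine ⟨h2, h1, by rwa [Set.inter_comm], ?_⟩
  rw [Set.union_comm]
  tauto

theorem StrictRel.transGen_symm {V : Type*} {G : SimpleGraph V} {X Y : Set V}
    (h : Relation.ReflTransGen (StrictRel G) X Y) : Relation.ReflTransGen (StrictRel G) Y X := by
  induction h with
  | refl => exact .refl
  | tail _ hbc ih => exact .head hbc.symm ih

theorem IsPCAGraph.exists_arcModel {V : Type*} {G : SimpleGraph V} (h : IsPCAGraph G) :
    ∃ n s k, ArcModel G n s k := by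
  obtain ⟨n, -, l, -, harc, hinc, hadj⟩ := h
  choose hne s k _ hl using harc
  refine ⟨n, s, k, ⟨?_, ?_, ?_⟩⟩
  · intro v
    obtain ⟨x, hx⟩ := hne v
    rw [hl v] at hx
    obtain ⟨i, hi, -⟩ := hx
    omega
  · intro u v huv hall
    apply hinc u v huv
    rw [hl u, hl v]
    rintro x ⟨i, hi, rfl⟩
    exact hall i hi
  · intro u v huv
    rw [hadj u v huv, hl u, hl v]
    constructor
    · rintro ⟨x, ⟨i, hi, hx⟩, j, hj, hx'⟩
      exact ⟨i, hi, j, hj, hx.symm.trans hx'⟩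
    · rintro ⟨i, hi, j, hj, h⟩
      exact ⟨_, ⟨i, hi, rfl⟩, j, hj, h⟩

namespace ArcModel

variable {V : Type*} {G : SimpleGraph V} {n : ℕ} {s : V → ZMod n} {k : V → ℕ}

/-- If the arc of `w` starts `e` steps after that of `u`, it extends past the end of the latter;
otherwise it would be contained in the arc of `u`. -/
theorem len_lt (M : ArcModel G n s k) {u w : V} (huw : u ≠ w) {e : ℕ}
    (hs : s w = s u + (e : ZMod n)) : k u < e + k w := by
  by_contra hcon
  apply M.incomp w u huw.symm
  intro i hi
  refine ⟨e + i, by omega, ?_⟩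
  rw [hs]; push_cast; ring

theorem start_ne (M : ArcModel G n s k) {u w : V} (huw : u ≠ w) : s w ≠ s u := by
  intro h
  have h1 := M.len_lt huw (e := 0) (by simpa using h)
  have h2 := M.len_lt huw.symm (e := 0) (by simpa using h.symm)
  omega

theorem adj_iff (M : ArcModel G n s k) {u v : V} (huv : u ≠ v) :
    G.Adj u v ↔ (∃ d < k u, s v = s u + (d : ZMod n)) ∨ ∃ d < k v, s u = s v + (d : ZMod n) := by
  rw [M.adj u v huv]
  constructor
  · rintro ⟨i, hi, j, hj, h⟩
    rcases le_total j i with hji | hij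
    · left
      refine ⟨i - j, by omega, ?_⟩
      rw [Nat.cast_sub hji]
      linear_combination -h
    · right
      refine ⟨j - i, by omega, ?_⟩
      rw [Nat.cast_sub hij]
      linear_combination h
  · rintro (⟨d, hd, h⟩ | ⟨d, hd, h⟩)
    · exact ⟨d, hd, 0, M.pos v, by simp [h]⟩
    · exact ⟨0, M.pos u, d, hd, by simp [h]⟩

theorem bipartite_of_two_points (M : ArcModel G n s k) (x y : ZMod n)
    (h : ∀ w, (∃ i < k w, x = s w + (i : ZMod n)) ∨ ∃ i < k w, y = s w + (i : ZMod n)) :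
    IsBipartite Gᶜ := by
  refine ⟨{w | ∃ i < k w, x = s w + (i : ZMod n)}, ?_, ?_⟩
  · rintro u ⟨i, hi, hu⟩ v ⟨j, hj, hv⟩ hadj
    rw [SimpleGraph.compl_adj] at hadj
    exact hadj.2 ((M.adj u v hadj.1).2 ⟨i, hi, j, hj, hu.symm.trans hv⟩)
  · intro u hu v hv hadj
    obtain ⟨i, hi, hu⟩ := (h u).resolve_left hu
    obtain ⟨j, hj, hv⟩ := (h v).resolve_left hv
    rw [SimpleGraph.compl_adj] at hadj
    exact hadj.2 ((M.adj u v hadj.1).2 ⟨i, hi, j, hj, hu.symm.trans hv⟩)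

/-- An arc starting inside the arc of `v` contains the end of the arc of `v`. -/
theorem contains_end (M : ArcModel G n s k) {v w : V} (hvw : v ≠ w) {e : ℕ} (he : e < k v)
    (hs : s w = s v + (e : ZMod n)) :
    ∃ i < k w, s v + ((k v - 1 : ℕ) : ZMod n) = s w + (i : ZMod n) := by
  have h1 := M.len_lt hvw hs
  refine ⟨k v - 1 - e, by omega, ?_⟩
  rw [hs, Nat.cast_sub (show e ≤ k v - 1 by omega)]
  ring

theorem nbhd_ne_univ (M : ArcModel G n s k) (hnb : ¬ IsBipartite Gᶜ) (v : V) :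
    ClosedNbhd G v ≠ Set.univ := by
  intro huniv
  apply hnb
  refine M.bipartite_of_two_points (s v) (s v + ((k v - 1 : ℕ) : ZMod n)) fun w => ?_
  by_cases hvw : v = w
  · subst hvw
    exact Or.inl ⟨0, M.pos v, by simp⟩
  have hw : w ∈ ClosedNbhd G v := huniv ▸ Set.mem_univ w
  rcases hw with rfl | hw
  · exact absurd rfl hvw
  rcases (M.adj_iff hvw).1 hw.symm with ⟨e, he, hs⟩ | hs
  · exact Or.inr (M.contains_end hvw he hs)
  · exact Or.inl hs

/-- If the arc of `v` is the next one to start after that of `u`, then `N[u] ∪ N[v] ≠ V`. -/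
theorem union_ne_univ (M : ArcModel G n s k) (hnb : ¬ IsBipartite Gᶜ) {u v : V} (huv : u ≠ v)
    {d : ℕ} (hs : s v = s u + (d : ZMod n))
    (hgap : ∀ w, w ≠ u → w ≠ v → ∀ e, 0 < e → e < d → s w ≠ s u + (e : ZMod n)) :
    ClosedNbhd G u ∪ ClosedNbhd G v ≠ Set.univ := by
  intro huniv
  apply hnb
  refine M.bipartite_of_two_points (s u) (s v + ((k v - 1 : ℕ) : ZMod n)) fun w => ?_
  by_cases hwu : w = u
  · subst hwu
    exact Or.inl ⟨0, M.pos w, by simp⟩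
  by_cases hwv : w = v
  · subst hwv
    exact Or.inr ⟨k w - 1, by have := M.pos w; omega, rfl⟩
  have hw : w ∈ ClosedNbhd G u ∪ ClosedNbhd G v := huniv ▸ Set.mem_univ w
  have hlen := M.len_lt huv hs
  rcases hw with (rfl | hw) | (rfl | hw)
  · exact absurd rfl hwu
  · rcases (M.adj_iff hwu).1 hw with h | ⟨e, he, hse⟩
    · exact Or.inl h
    -- The arc of `w` starts in that of `u`, hence after `s v`, hence in the arc of `v`.
    right
    have he0 : 0 < e := by
      rcases Nat.eq_zero_or_pos e with rfl | h
      · exact absurd (by simpa using hse) (M.start_ne (Ne.symm hwu))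
      · exact h
    have hde : d ≤ e := by
      by_contra hlt
      exact hgap w hwu hwv e he0 (by omega) hse
    refine M.contains_end (Ne.symm hwv) (e := e - d) (by omega) ?_
    rw [hse, hs, Nat.cast_sub hde]
    ring
  · exact absurd rfl hwv
  · rcases (M.adj_iff hwv).1 hw with ⟨f, hf, hsf⟩ | ⟨e, he, hse⟩
    · -- The arc of `w` contains `s v`; it starts no later than `s u`, hence contains `s u`.
      left
      have hf0 : 0 < f := by
        rcases Nat.eq_zero_or_pos f with rfl | h
        · exact absurd (by simpa using hsf) (M.start_ne hwv)
        · exact h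
      have hdf : d ≤ f := by
        by_contra hlt
        refine hgap w hwu hwv (d - f) (by omega) (by omega) ?_
        rw [Nat.cast_sub (by omega)]
        linear_combination hs - hsf
      refine ⟨f - d, by omega, ?_⟩
      rw [Nat.cast_sub hdf]
      linear_combination hsf - hs
    · exact Or.inr (M.contains_end (Ne.symm hwv) he hse)

/-- If the arc of `u` contains the start of the arc of `v`, then `N[u]` and `N[v]` are joined by a
chain passing through the arcs that start in between. -/
theorem chain (M : ArcModel G n s k) (hnb : ¬ IsBipartite Gᶜ) (d : ℕ) :
    ∀ u v : V, u ≠ v → d < k u → s v = s u + (d : ZMod n) →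
      Relation.ReflTransGen (StrictRel G) (ClosedNbhd G u) (ClosedNbhd G v) := by
  induction d using Nat.strong_induction_on with
  | _ d ih =>
    intro u v huv hd hs
    by_cases hw : ∃ w, w ≠ u ∧ w ≠ v ∧ ∃ e, 0 < e ∧ e < d ∧ s w = s u + (e : ZMod n)
    · obtain ⟨w, hwu, hwv, e, he0, hed, hse⟩ := hw
      have hlen := M.len_lt (Ne.symm hwu) hse
      refine (ih e hed u w (Ne.symm hwu) (by omega) hse).trans
        (ih (d - e) (by omega) w v hwv (by omega) ?_)
      rw [hs, hse, Nat.cast_sub hed.le]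
      ring
    · refine .single ⟨⟨u, rfl⟩, ⟨v, rfl⟩, ⟨u, Or.inl rfl, Or.inr ?_⟩, Or.inr (Or.inr ?_)⟩
      · exact (M.adj_iff huv).2 (Or.inl ⟨d, hd, hs⟩)
      · refine M.union_ne_univ hnb huv hs ?_
        intro w hwu hwv e he0 hed hse
        exact hw ⟨w, hwu, hwv, e, he0, hed, hse⟩

end ArcModel

/-- If `G` is a connected proper circular-arc graph whose complement
is not bipartite, then its closed neighborhood hypergraph is strictly connected. -/
theorem stmt15 {V : Type*} [Fintype V] (G : SimpleGraph V)
    (hconn : G.Connected) (hpca : IsPCAGraph G) (hnb : ¬ IsBipartite Gᶜ) :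
    StrictlyConnectedHypergraph (Set.range fun v => ClosedNbhd G v) := by
  obtain ⟨n, s, k, M⟩ := hpca.exists_arcModel
  refine ⟨fun x => ⟨_, ⟨x, rfl⟩, Or.inl rfl⟩, ?_, ?_, ?_⟩
  · rintro ⟨v, hv⟩
    have : v ∈ ClosedNbhd G v := Or.inl rfl
    simp only [hv] at this
    exact this
  · rintro ⟨v, hv⟩
    exact M.nbhd_ne_univ hnb v hv
  · rintro _ ⟨u, rfl⟩ _ ⟨v, rfl⟩
    change Relation.ReflTransGen (StrictRel G) (ClosedNbhd G u) (ClosedNbhd G v)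
    obtain ⟨p⟩ := hconn.preconnected u v
    induction p with
    | nil => exact .refl
    | cons hadj _ ih =>
      refine Relation.ReflTransGen.trans ?_ ih
      rcases (M.adj_iff hadj.ne).1 hadj with ⟨d, hd, hs⟩ | ⟨d, hd, hs⟩
      · exact M.chain hnb d _ _ hadj.ne hd hs
      · exact StrictRel.transGen_symm (M.chain hnb d _ _ hadj.ne.symm hd hs)
end

section
/- Every co-convex graph is a circular-arc graph: if the complement of a finite simple graph G is a convex bipartite graph, then G is a circular-arc graph. -/
/-!
Write `N(w)` for the set of non-neighbors of `w` other than `w`. The vertex set is the union of two cliques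
`U` and `W`, and the vertices of `U` can be numbered `0, 1, 2, …` by an `f` such that each `N(w)`,
`w ∈ W`, is a set of consecutive elements of `U`.

Let `N` be the number of vertices and, for a moment, use unscaled points. Each `u ∈ U` gets the
arc `[f u, f u + N]`; all these arcs have the same length and contain the point `N`. Each `w ∈ W`
gets the complement of an arc `C_w = [a, b + N]`, where `a` and `b` are the least and the greatest
value of `f` on `N(w)`. All these complements contain the last point of the circle. The arcs of `u`
and `w` are disjoint iff `[f u, f u + N] ⊆ C_w`, that is iff `a ≤ f u ≤ b`, that is iff
`u ∈ N(w)`. If `N(w)` is empty, `C_w` is taken as `[0, 0]`, which contains no arc of `U`.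

The arcs of `W` need not be distinct yet, so the picture is scaled by `K = N + 1` and the right end
of `C_w` is moved by a number `j w < K` that is injective in `w`; this moves it past no scaled
point, so intersections are unchanged, and `j w` can be read off modulo `K`.
The bounds `a` and `b + N` come from `exists_bounds`, the numbering from `exists_rank`, and the
description of arcs by representatives in `[0, n)` from `isArc_of_val`.
-/

open Set

/-- The set of points whose representative lies in `[a, a + k)`, possibly wrapping around past
`n`, is an arc. -/
lemma isArc_of_val {n a k : ℕ} (hn : 0 < n) (ha : a < n) (hk : k ≤ n) :
    IsArc n {x : ZMod n | (a ≤ x.val ∧ x.val < a + k) ∨ x.val + n < a + k} := by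
  have : NeZero n := ⟨hn.ne'⟩
  refine ⟨(a : ZMod n), k, hk, ?_⟩
  ext x
  have hx : x.val < n := ZMod.val_lt x
  simp only [Set.mem_ofPred_eq]
  constructor
  · rintro (h | h)
    · refine ⟨x.val - a, by omega, ?_⟩
      rw [← Nat.cast_add, show a + (x.val - a) = x.val by omega, ZMod.natCast_zmod_val]
    · refine ⟨x.val + n - a, by omega, ?_⟩
      rw [← Nat.cast_add, show a + (x.val + n - a) = x.val + n by omega, Nat.cast_add,
        ZMod.natCast_zmod_val, ZMod.natCast_self, add_zero]
  · rintro ⟨i, hi, rfl⟩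
    rw [← Nat.cast_add, ZMod.val_natCast]
    rcases lt_or_ge (a + i) n with h | h
    · rw [Nat.mod_eq_of_lt h]; omega
    · rw [Nat.mod_eq_sub_mod h, Nat.mod_eq_of_lt (by omega)]; omega

/-- A linear order on a finite type is induced by a numbering with small values. -/
lemma exists_rank {α : Type*} [Fintype α] (r : α → α → Prop) (hr : IsLinearOrder α r) :
    ∃ f : α → ℕ, (∀ x, f x < Fintype.card α) ∧ ∀ x y, r x y ↔ f x ≤ f y := by
  classical
  let : LinearOrder α :=
    { le := r
      le_refl := fun x => hr.refl x
      le_trans := fun x y z => hr.trans x y z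
      le_antisymm := fun x y => hr.antisymm x y
      le_total := fun x y => hr.total x y
      toDecidableLE := Classical.decRel _ }
  let e := Fintype.orderIsoFinOfCardEq α rfl
  exact ⟨fun x => (e.symm x : ℕ), fun x => (e.symm x).2,
    fun x y => (e.symm.le_iff_le (x := x) (y := y)).symm⟩

/-- An interval `S` is cut out by a lower bound `s` on `f` and an upper bound `e` on `f + N`. The
shift by `N` lets `s = e = 0` describe the empty set. -/
lemma exists_bounds {α : Type*} [Finite α] (N : ℕ) (f : α → ℕ) (hf : ∀ x, f x < N)
    (S : Set α) (hS : IsIntervalWrt (fun x y => f x ≤ f y) S) :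
    ∃ s e : ℕ, s ≤ e ∧ (e = 0 ∨ e < 2 * N) ∧ ∀ x, x ∈ S ↔ s ≤ f x ∧ f x + N ≤ e := by
  rcases S.eq_empty_or_nonempty with rfl | hne
  · refine ⟨0, 0, le_rfl, Or.inl rfl, fun x => ?_⟩
    have := hf x
    simp only [Set.mem_empty_iff_false, false_iff]
    omega
  · obtain ⟨x, hx, hmin⟩ := S.toFinite.exists_minimalFor f S hne
    obtain ⟨z, hz, hmax⟩ := S.toFinite.exists_maximalFor f S hne
    have hmin' : ∀ y ∈ S, f x ≤ f y := fun y hy => by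
      rcases le_total (f x) (f y) with h | h
      · exact h
      · exact hmin hy h
    have hmax' : ∀ y ∈ S, f y ≤ f z := fun y hy => by
      rcases le_total (f y) (f z) with h | h
      · exact h
      · exact hmax hy h
    have h1 := hmin' z hz
    have h2 := hf z
    refine ⟨f x, f z + N, by omega, Or.inr (by omega), fun y => ⟨fun hy => ?_, fun hy => ?_⟩⟩
    · have := hmin' y hy
      have := hmax' y hy
      omega
    · exact hS x y z hy.1 (by omega) hx hz

/-- Every co-convex graph is a circular-arc graph: if the complement
of `G` is a convex bipartite graph, then `G` is a circular-arc graph. -/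
theorem stmt16 {V : Type*} [Fintype V] (G : SimpleGraph V)
    (h : ∃ U W : Set V, U ∪ W = Set.univ ∧ U ∩ W = ∅ ∧
      (∀ u ∈ U, ∀ v ∈ U, ¬ Gᶜ.Adj u v) ∧
      (∀ u ∈ W, ∀ v ∈ W, ¬ Gᶜ.Adj u v) ∧
      IsIntervalHypergraph (fun w : W => {u : U | Gᶜ.Adj (u : V) (w : V)})) :
    IsCAGraph G := by
  classical
  obtain ⟨U, W, hUW, hdisj, hU, hW, r, hr, hint⟩ := h
  have hWU : ∀ v, v ∉ U → v ∈ W := fun v hv => by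
    have : v ∈ U ∪ W := hUW ▸ Set.mem_univ v
    exact this.resolve_left hv
  obtain ⟨f₀, hf₀, hrf⟩ := exists_rank r hr
  set N := Fintype.card V with hN
  have hcard : Fintype.card U ≤ N := Fintype.card_subtype_le _
  have hf₀N : ∀ x, f₀ x < N := fun x => (hf₀ x).trans_le hcard
  have hb : ∀ w : W, ∃ s e : ℕ, s ≤ e ∧ (e = 0 ∨ e < 2 * N) ∧
      ∀ x : U, Gᶜ.Adj (x : V) w ↔ s ≤ f₀ x ∧ f₀ x + N ≤ e := fun w =>
    exists_bounds N f₀ hf₀N _ fun x y z hxy hyz =>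
      hint w x y z ((hrf x y).2 hxy) ((hrf y z).2 hyz)
  choose s₀ e₀ hse₀ he₀ hadj₀ using hb
  -- Everything is extended to functions on `V` by the junk value `0`.
  let f : V → ℕ := fun v => if h : v ∈ U then f₀ ⟨v, h⟩ else 0
  let s : V → ℕ := fun v => if h : v ∈ W then s₀ ⟨v, h⟩ else 0
  let e : V → ℕ := fun v => if h : v ∈ W then e₀ ⟨v, h⟩ else 0
  have hfN : ∀ v ∈ U, f v < N := fun v hv => by simp only [f, dif_pos hv]; exact hf₀N _
  have hfinj : ∀ u ∈ U, ∀ v ∈ U, f u = f v → u = v := fun u hu v hv h => by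
    simp only [f, dif_pos hu, dif_pos hv] at h
    exact congrArg Subtype.val
      (hr.antisymm _ _ ((hrf ⟨u, hu⟩ ⟨v, hv⟩).2 h.le) ((hrf ⟨v, hv⟩ ⟨u, hu⟩).2 h.ge))
  have hNpos : ∀ _ : V, 0 < N := fun v => Fintype.card_pos_iff.2 ⟨v⟩
  have hse : ∀ v ∈ W, s v ≤ e v := fun v hv => by
    simp only [s, e, dif_pos hv]; exact hse₀ _
  have heN : ∀ v ∈ W, e v < 2 * N := fun v hv => by
    have h1 := hNpos v
    have h2 := he₀ ⟨v, hv⟩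
    simp only [e, dif_pos hv]
    omega
  have hadj : ∀ u ∈ U, ∀ w ∈ W, Gᶜ.Adj u w ↔ s w ≤ f u ∧ f u + N ≤ e w :=
    fun u hu w hw => by
      simp only [s, e, f, dif_pos hu, dif_pos hw]; exact hadj₀ ⟨w, hw⟩ ⟨u, hu⟩
  let j : V → ℕ := fun v => (Fintype.equivFin V v : ℕ)
  have hjN : ∀ v, j v < N := fun v => (Fintype.equivFin V v).2
  have hjinj : ∀ u v, j u = j v → u = v := fun u v h =>
    (Fintype.equivFin V).injective (Fin.ext h)
  clear_value f s e j N
  set K := N + 1 with hK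
  set T := K * (2 * N) with hT
  have hTN : T = K * N + K * N := by rw [hT]; ring
  have hfK : ∀ v ∈ U, K * f v + K ≤ K * N := fun v hv => by
    rw [← Nat.mul_succ]; exact Nat.mul_le_mul_left K (hfN v hv)
  have heK : ∀ v ∈ W, K * e v + j v < T := fun v hv => by
    have h1 : K * (e v + 1) ≤ T := Nat.mul_le_mul_left K (heN v hv)
    have h2 := hjN v
    rw [Nat.mul_succ] at h1
    omega
  have hseK : ∀ v ∈ W, K * s v ≤ K * e v := fun v hv => Nat.mul_le_mul_left K (hse v hv)
  -- The circle is `ZMod (T + 1)`, with last point `T`.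
  have hval : ∀ y, y ≤ T → ((y : ℕ) : ZMod (T + 1)).val = y := fun y hy =>
    ZMod.val_cast_of_lt (Nat.lt_succ_of_le hy)
  let A : V → Set (ZMod (T + 1)) := fun v => {x | K * f v ≤ x.val ∧ x.val ≤ K * f v + K * N}
  let B : V → Set (ZMod (T + 1)) := fun v => {x | x.val < K * s v ∨ K * e v + j v < x.val}
  have hA : ∀ v y, y ≤ T → ((y : ZMod (T + 1)) ∈ A v ↔ K * f v ≤ y ∧ y ≤ K * f v + K * N) :=
    fun v y hy => by simp only [A, Set.mem_ofPred_eq, hval y hy]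
  have hB : ∀ v y, y ≤ T → ((y : ZMod (T + 1)) ∈ B v ↔ y < K * s v ∨ K * e v + j v < y) :=
    fun v y hy => by simp only [B, Set.mem_ofPred_eq, hval y hy]
  have hmid : ∀ v ∈ U, ((K * N : ℕ) : ZMod (T + 1)) ∈ A v := fun v hv => by
    have := hfK v hv
    rw [hA _ _ (by omega)]
    omega
  have hlast : ∀ v ∈ W, ((T : ℕ) : ZMod (T + 1)) ∈ B v := fun v hv =>
    (hB _ _ le_rfl).2 (Or.inr (heK v hv))
  have hAB : ∀ u ∈ U, ∀ w ∈ W, A u ≠ B w := fun u hu w hw h => by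
    have h1 := hlast w hw
    rw [← h, hA _ _ le_rfl] at h1
    have := hfK u hu
    omega
  -- The arcs of `u` and `w` are disjoint exactly if `A u` lies in the complement of `B w`.
  have hcross : ∀ u ∈ U, ∀ w ∈ W, G.Adj u w ↔ (A u ∩ B w).Nonempty := fun u hu w hw => by
    have hne : u ≠ w := by
      rintro rfl
      exact (hdisj ▸ (⟨hu, hw⟩ : u ∈ U ∩ W) : u ∈ (∅ : Set V))
    have h1 := hadj u hu w hw
    rw [SimpleGraph.compl_adj] at h1
    have h2 : G.Adj u w ↔ ¬ (s w ≤ f u ∧ f u + N ≤ e w) := by rw [← h1]; tauto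
    have hfu := hfK u hu
    have hj := hjN w
    rw [h2]
    constructor
    · intro h
      by_cases hs : s w ≤ f u
      · have h3 : e w + 1 ≤ f u + N := by
          by_contra h4
          exact h ⟨hs, by omega⟩
        have h4 : K * (e w + 1) ≤ K * (f u + N) := Nat.mul_le_mul_left K h3
        rw [Nat.mul_succ, Nat.mul_add] at h4
        refine ⟨((K * f u + K * N : ℕ) : ZMod (T + 1)), ?_, ?_⟩
        · rw [hA _ _ (by omega)]; omega
        · rw [hB _ _ (by omega)]; omega
      · have h4 : K * (f u + 1) ≤ K * s w := Nat.mul_le_mul_left K (by omega)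
        rw [Nat.mul_succ] at h4
        refine ⟨((K * f u : ℕ) : ZMod (T + 1)), ?_, ?_⟩
        · rw [hA _ _ (by omega)]; omega
        · rw [hB _ _ (by omega)]; omega
    · rintro ⟨x, ⟨hx1, hx2⟩, hx3⟩ ⟨h3, h4⟩
      have h5 : K * s w ≤ K * f u := Nat.mul_le_mul_left K h3
      have h6 : K * (f u + N) ≤ K * e w := Nat.mul_le_mul_left K h4
      rw [Nat.mul_add] at h6
      rcases hx3 with hx3 | hx3 <;> omega
  -- The point `K * e v + j v`, the end of the complement of `B v`, determines `v`.
  have hBle : ∀ v ∈ W, ∀ w ∈ W, B v = B w → K * e v + j v ≤ K * e w + j w :=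
    fun v hv w hw h => by
      have h1 := heK v hv
      have h2 := hseK v hv
      have h3 : ((K * e v + j v : ℕ) : ZMod (T + 1)) ∉ B v := by
        rw [hB _ _ h1.le]; omega
      rw [h, hB _ _ h1.le] at h3
      omega
  have hBinj : ∀ v ∈ W, ∀ w ∈ W, B v = B w → v = w := fun v hv w hw h => by
    have h1 := le_antisymm (hBle v hv w hw h) (hBle w hw v hv h.symm)
    have h2 := congrArg (· % K) h1
    simp only [Nat.mul_add_mod] at h2
    rw [Nat.mod_eq_of_lt ((hjN v).trans (Nat.lt_succ_self N)),
      Nat.mod_eq_of_lt ((hjN w).trans (Nat.lt_succ_self N))] at h2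
    exact hjinj v w h2
  have hAle : ∀ v ∈ U, ∀ w ∈ U, A v = A w → f w ≤ f v := fun v hv w hw h => by
    have h1 := hfK v hv
    have h2 : ((K * f v : ℕ) : ZMod (T + 1)) ∈ A v := by
      rw [hA _ _ (by omega)]; omega
    rw [h, hA _ _ (by omega)] at h2
    exact Nat.le_of_mul_le_mul_left h2.1 (Nat.succ_pos N)
  have hclique : ∀ S : Set V, (∀ u ∈ S, ∀ v ∈ S, ¬ Gᶜ.Adj u v) →
      ∀ u ∈ S, ∀ v ∈ S, u ≠ v → G.Adj u v := fun S hS u hu v hv hne => by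
    have := hS u hu v hv
    rw [SimpleGraph.compl_adj] at this
    tauto
  refine ⟨T + 1, Nat.succ_pos T, fun v => if v ∈ U then A v else B v, ?_, ?_, ?_⟩
  · intro u v h
    by_cases hu : u ∈ U <;> by_cases hv : v ∈ U <;> simp only [hu, hv, if_true, if_false] at h
    · exact hfinj u hu v hv (le_antisymm (hAle v hv u hu h.symm) (hAle u hu v hv h))
    · exact (hAB u hu v (hWU v hv) h).elim
    · exact (hAB v hv u (hWU u hu) h.symm).elim
    · exact hBinj u (hWU u hu) v (hWU v hv) h
  · intro v
    by_cases hv : v ∈ U <;> simp only [hv, if_true, if_false]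
    · refine ⟨⟨_, hmid v hv⟩, ?_⟩
      have h1 := hfK v hv
      convert isArc_of_val (n := T + 1) (a := K * f v) (k := K * N + 1)
        (Nat.succ_pos T) (by omega) (by omega) using 1
      ext x
      simp only [A, Set.mem_ofPred_eq]
      omega
    · have hw := hWU v hv
      refine ⟨⟨_, hlast v hw⟩, ?_⟩
      have h1 := heK v hw
      have h2 := hseK v hw
      convert isArc_of_val (n := T + 1) (a := K * e v + j v + 1)
        (k := T + 1 - (K * e v + j v + 1) + K * s v)
        (Nat.succ_pos T) (by omega) (by omega) using 1
      ext x
      have hx : x.val < T + 1 := ZMod.val_lt x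
      simp only [B, Set.mem_ofPred_eq]
      omega
  · intro u v hne
    by_cases hu : u ∈ U <;> by_cases hv : v ∈ U <;> simp only [hu, hv, if_true, if_false]
    · exact iff_of_true (hclique U hU u hu v hv hne) ⟨_, hmid u hu, hmid v hv⟩
    · exact hcross u hu v (hWU v hv)
    · rw [G.adj_comm, Set.inter_comm]
      exact hcross v hv u (hWU u hu)
    · exact iff_of_true (hclique W hW u (hWU u hu) v (hWU v hv) hne)
        ⟨_, hlast u (hWU u hu), hlast v (hWU v hv)⟩
end

section
/- Let G be a proper interval graph on a finite vertex set V and let H be any simple graph on the same vertex set V. If the closed neighborhood hypergraphs coincide as hypergraphs with multiplicities — that is, there is a permutation σ of V with N_H[v] = N_G[σ(v)] for every v ∈ V — then H = G. -/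
/-!
Write `N[v]` for closed neighborhoods in `G`. Symmetry of `H` says `u ∈ N[σ v] ↔ v ∈ N[σ u]`, and
reflexivity says `v ∈ N[σ v]`. In particular `σ` restricts to a bijection `N[σ u] → N[u]`, so these
two sets have the same size.

Order the vertices by the left endpoints of their intervals; incomparability makes the right
endpoints monotone in this order, so every `N[w]` is convex. By strong induction along the order,
`N[σ u] = N[u]`: if this holds for all `v < u`, then
`v ∈ N[σ u] ↔ u ∈ N[σ v] = N[v] ↔ v ∈ N[u]`, so the two sets agree below `u`. Both are convex and
contain `u`, hence they are nested, and having equal size they coincide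
(`eq_of_convex_of_agree_below`). Therefore `H` and `G` have the same closed neighborhoods.
-/

open Set

theorem mem_closedNbhd_comm {V : Type*} (G : SimpleGraph V) (u v : V) :
    u ∈ ClosedNbhd G v ↔ v ∈ ClosedNbhd G u := by
  simp only [ClosedNbhd, Set.mem_ofPred_eq, G.adj_comm u v, eq_comm]

/-- Endpoint form of a proper interval model: closed adjacency is overlap of `[a u, b u]` and
`[a v, b v]`, and right endpoints are ordered like left endpoints. -/
theorem IsProperIntervalGraph.exists_endpoints {V : Type*} {G : SimpleGraph V}
    (hG : IsProperIntervalGraph G) :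
    ∃ a b : V → ℤ, (∀ u v, a u ≤ a v → b u ≤ b v) ∧
      ∀ u v, u ∈ ClosedNbhd G v ↔ a u ≤ b v ∧ a v ≤ b u := by
  obtain ⟨l, hl, hinc, hadj⟩ := hG
  choose a b hab hl using hl
  refine ⟨a, b, fun u v huv => ?_, fun u v => ?_⟩
  · by_contra! hlt
    refine hinc v u (fun e => by simp [e] at hlt) ?_
    rw [hl, hl]
    exact Set.Icc_subset_Icc huv hlt.le
  · by_cases e : u = v
    · subst e
      simp [ClosedNbhd, hab]
    · simp only [ClosedNbhd, Set.mem_ofPred_eq, e, false_or, hadj u v e, hl, Set.Icc_inter_Icc,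
        Set.nonempty_Icc]
      have := hab u
      have := hab v
      grind

/-- Two finite sets of equal size, both convex for the preorder induced by `a` and containing `u`,
are equal as soon as they agree strictly below `u`. -/
theorem eq_of_convex_of_agree_below {V : Type*} [Finite V] (a : V → ℤ) {S T : Set V} {u : V}
    (hS : ∀ x y z, a x ≤ a y → a y ≤ a z → x ∈ S → z ∈ S → y ∈ S)
    (hT : ∀ x y z, a x ≤ a y → a y ≤ a z → x ∈ T → z ∈ T → y ∈ T)
    (huS : u ∈ S) (huT : u ∈ T) (hlow : ∀ v, a v < a u → (v ∈ S ↔ v ∈ T))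
    (hcard : S.ncard = T.ncard) : S = T := by
  by_cases hsub : S ⊆ T
  · exact Set.eq_of_subset_of_ncard_le hsub hcard.ge
  · obtain ⟨x, hxS, hxT⟩ := Set.not_subset.mp hsub
    -- Such an `x` lies at or above `u`, so `T` cannot reach beyond `x`.
    have hux : a u ≤ a x := by
      by_contra! hlt
      exact hxT ((hlow x hlt).mp hxS)
    refine (Set.eq_of_subset_of_ncard_le (fun y hy => ?_) hcard.le).symm
    rcases lt_or_ge (a y) (a u) with hyu | huy
    · exact (hlow y hyu).mpr hy
    · rcases le_total (a y) (a x) with hyx | hxy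
      · exact hS u y x huy hyx huS hxS
      · exact absurd (hT u x y hux hxy huT hy) hxT

/-- A proper interval graph `G` is exactly reconstructible from its
closed neighborhood hypergraph: if `H` is any graph on the same vertex set with
`N_H[v] = N_G[σ(v)]` for a permutation `σ`, then `H = G`. -/
theorem stmt17 {V : Type*} [Fintype V] (G H : SimpleGraph V)
    (hG : IsProperIntervalGraph G) (σ : Equiv.Perm V)
    (h : ∀ v, ClosedNbhd H v = ClosedNbhd G (σ v)) :
    H = G := by
  obtain ⟨a, b, hmono, hmem⟩ := hG.exists_endpoints
  have hself (v : V) : v ∈ ClosedNbhd G (σ v) := by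
    rw [← h]
    exact Or.inl rfl
  have hswap (u v : V) : u ∈ ClosedNbhd G (σ v) ↔ v ∈ ClosedNbhd G (σ u) := by
    rw [← h, ← h, mem_closedNbhd_comm]
  have hconv (w x y z : V) (hxy : a x ≤ a y) (hyz : a y ≤ a z)
      (hx : x ∈ ClosedNbhd G w) (hz : z ∈ ClosedNbhd G w) : y ∈ ClosedNbhd G w := by
    rw [hmem] at hx hz ⊢
    exact ⟨hyz.trans hz.1, hx.2.trans (hmono x y hxy)⟩
  have hcard (u : V) : (ClosedNbhd G (σ u)).ncard = (ClosedNbhd G u).ncard := by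
    have himg : ClosedNbhd G (σ u) = σ ⁻¹' ClosedNbhd G u := by
      ext v
      rw [Set.mem_preimage, hswap v u, mem_closedNbhd_comm]
    rw [himg, ← Equiv.image_symm_eq_preimage, Set.ncard_image_of_injective _ σ.symm.injective]
  have hwf : WellFounded (fun u v : V => a u < a v) := by
    have : IsTrans V (fun u v => a u < a v) := ⟨fun _ _ _ => lt_trans⟩
    have : Std.Irrefl (fun u v : V => a u < a v) := ⟨fun _ => lt_irrefl _⟩
    exact Finite.wellFounded_of_trans_of_irrefl _
  have key (u : V) : ClosedNbhd G (σ u) = ClosedNbhd G u := by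
    induction u using hwf.induction with
    | _ u ih =>
      refine eq_of_convex_of_agree_below a (hconv _) (hconv _) (hself u) (Or.inl rfl)
        (fun v hv => ?_) (hcard u)
      rw [hswap v u, ih v hv, mem_closedNbhd_comm]
  ext u v
  have huv : u ∈ ClosedNbhd H v ↔ u ∈ ClosedNbhd G v := by rw [h, key]
  by_cases e : u = v
  · simp [e]
  · simpa [ClosedNbhd, e] using huv
end

section
/- Let G be a proper circular-arc graph on a finite vertex set V whose complement is not bipartite, and let H be any simple graph on the same vertex set V. If there is a permutation σ of V with N_H[v] = N_G[σ(v)] for every v ∈ V (i.e., N[G] = N[H] as hypergraphs with multiplicities), then H = G. -/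
/-!
Write `A u v` for `u = v ∨ G.Adj u v`. The hypothesis says exactly that
`A v (σ v)` and `A u (σ v) ↔ A (σ u) v`; the goal is that `σ v` is always a twin of `v`.

**Lifting.** Order the vertices cyclically by the starting points of their arcs and unroll this
cyclic order to `ℤ` with period `m`. For an index `i` let `F i` be the first later index whose arc
starts after the arc of `i` ends. As the arcs are pairwise incomparable, `F` is monotone, and
`i`, `j` represent equal or adjacent vertices iff `i < F (j + k m)` and `j + k m < F i` for
some `k` (`RoundLift`, `exists_roundLift`). The sets `[i, F i)` are cliques, so if
`i + m ≤ F (F i)` for some `i` then two cliques cover `G` and its complement is bipartite.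
Hence `F (F i) < i + m` for all `i`.

**Lifting the permutation.** Since `σ v` is in the closed neighborhood of `v`, both `σ` and `σ⁻¹`
lift canonically to mutually inverse `s, t : ℤ → ℤ`. Call `j` far from `i` when
`F i ≤ j` and `F j ≤ i + m`; far pairs are the lifts of non-adjacent pairs. A non-crossing argument
(`RoundLift.far_map`) shows that if `(i, j)` is far then so is `(s i, t j)`.

**Rigidity** (`far_iff_of_invariant`). The indices far from `i` form an interval `[F i, E i]`, which
`t` maps bijectively onto `[F (s i), E (s i)]`, so both end points move by the same amount `d i`.
The intervals of `i` and `i + 1` meet; comparing the sizes of their intersections before and after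
applying `t` gives `d (i + 1) ≤ d i`. As `d` is periodic it is a constant `d`.
Iterating on the far pair `(i, F i)` gives `F i + k d < F (F i) - k d` for every integer `k`, so
`d = 0`. Hence `i` and `s i` are far from the same indices, that is, they are twins.
-/

open Set

/-! ### Rigidity of the lifted permutation -/

/-- `j` lies strictly between the closed neighborhood of `i` and that of its next copy `i + m`. -/
def Far (F : ℤ → ℤ) (m i j : ℤ) : Prop := F i ≤ j ∧ F j ≤ i + m

/-- If `s` raises every value of `F` by `d` and `t` lowers it by `d`, then iterating `(s, t)` on the
far pair `(0, F 0)` pushes its members together when `d > 0`, which is impossible. -/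
lemma shift_nonpos (F s t : ℤ → ℤ) (m d : ℤ) (hlt : ∀ i, i < F i)
    (hFF : ∀ i, F (F i) < i + m)
    (hst : ∀ i j, Far F m i j → Far F m (s i) (t j))
    (hs : ∀ i, F (s i) = F i + d) (ht : ∀ i, F (t i) = F i - d) : d ≤ 0 := by
  have key : ∀ k : ℕ, Far F m (s^[k] 0) (t^[k] (F 0)) ∧ F (s^[k] 0) = F 0 + k * d ∧
      F (t^[k] (F 0)) = F (F 0) - k * d := by
    intro k
    induction k with
    | zero =>
      refine ⟨⟨le_rfl, (hFF 0).le⟩, by simp, by simp⟩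
    | succ k ih =>
      obtain ⟨h1, h2, h3⟩ := ih
      rw [Function.iterate_succ_apply', Function.iterate_succ_apply']
      refine ⟨hst _ _ h1, ?_, ?_⟩
      · rw [hs, h2]; push_cast; ring
      · rw [ht, h3]; push_cast; ring
  by_contra hd
  push Not at hd
  obtain ⟨⟨h1, -⟩, h2, h3⟩ := key (F (F 0) - F 0).toNat
  have h4 := hlt (t^[(F (F 0) - F 0).toNat] (F 0))
  have h5 : 0 < F (F 0) - F 0 := by linarith [hlt (F 0)]
  rw [Int.toNat_of_nonneg h5.le] at h2 h3
  nlinarith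

lemma periodic_antitone_const (d : ℤ → ℤ) (m : ℤ) (hm : 0 < m) (hper : ∀ i, d (i + m) = d i)
    (hd : ∀ i, d (i + 1) ≤ d i) (i j : ℤ) : d i = d j := by
  have hanti : Antitone d := antitone_int_of_succ_le hd
  have hk : ∀ (k : ℕ) i, d (i + k * m) = d i := by
    intro k
    induction k with
    | zero => simp
    | succ k ih =>
      intro i
      rw [← ih i, ← hper (i + k * m)]
      congr 1
      push_cast; ring
  have hle : ∀ i j, d i ≤ d j := by
    intro i j
    rw [← hk (j - i).natAbs i]
    apply hanti
    have : j - i ≤ ((j - i).natAbs : ℤ) := by omega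
    have h2 : (0 : ℤ) ≤ ((j - i).natAbs : ℤ) := by omega
    nlinarith
  exact le_antisymm (hle i j) (hle j i)

/-- A permutation `s` of `ℤ` whose pairing with `t = s⁻¹` preserves far pairs does not change the
set of indices far from a given one. -/
lemma far_iff_of_invariant (F s t : ℤ → ℤ) (m : ℤ) (hm : 0 < m) (hmono : Monotone F)
    (hlt : ∀ i, i < F i) (hper : ∀ i, F (i + m) = F i + m) (hFF : ∀ i, F (F i) < i + m)
    (hts : ∀ i, t (s i) = i) (hstid : ∀ i, s (t i) = i) (hsper : ∀ i, s (i + m) = s i + m)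
    (hst : ∀ i j, Far F m i j → Far F m (s i) (t j))
    (hts' : ∀ i j, Far F m i j → Far F m (t i) (s j)) (i j : ℤ) :
    Far F m (s i) j ↔ Far F m i j := by
  have hE : ∀ i, ∃ e, ∀ j, F j ≤ i + m ↔ j ≤ e := by
    intro i
    obtain ⟨e, he, hmax⟩ := Int.exists_greatest_of_bdd (P := fun j => F j ≤ i + m)
      ⟨i + m, fun j hj => (hlt j).le.trans hj⟩ ⟨F i, (hFF i).le⟩
    exact ⟨e, fun j => ⟨hmax j, fun hj => (hmono hj).trans he⟩⟩
  choose E hE using hE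
  have hEmono : Monotone E := by
    intro a b hab
    rw [← hE b]
    have := (hE a (E a)).2 le_rfl
    linarith
  have hFE : ∀ i, F (i + 1) ≤ E i := by
    intro i
    rw [← hE]
    have := hFF (i + 1)
    linarith
  have hFE' : ∀ i, F i ≤ E i := fun i => (hmono (by linarith)).trans (hFE i)
  have hfar : ∀ i j, Far F m i j ↔ F i ≤ j ∧ j ≤ E i := by
    intro i j
    rw [Far, hE]
  have hst2 : ∀ i j, Far F m (s i) (t j) ↔ Far F m i j := by
    intro i j
    refine ⟨fun h => ?_, hst i j⟩
    have := hts' _ _ h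
    rwa [hts, hstid] at this
  have htinj : Function.Injective t := Function.LeftInverse.injective hstid
  -- an injective `t` carrying one interval onto another preserves the number of elements
  have hcard : ∀ a b c e : ℤ, a ≤ b → (∀ j, (a ≤ j ∧ j ≤ b) ↔ (c ≤ t j ∧ t j ≤ e)) →
      e - c = b - a := by
    intro a b c e hab h
    have himg : (Finset.Icc a b).image t = Finset.Icc c e := by
      ext x
      simp only [Finset.mem_image, Finset.mem_Icc]
      constructor
      · rintro ⟨j, hj, rfl⟩
        exact (h j).1 hj
      · intro hx
        exact ⟨s x, (h _).2 (by rwa [hts]), hts x⟩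
    have h1 := congrArg Finset.card himg
    rw [Finset.card_image_of_injective _ htinj, Int.card_Icc, Int.card_Icc] at h1
    omega
  have hdE : ∀ i, E (s i) - F (s i) = E i - F i := by
    intro i
    apply hcard _ _ _ _ (hFE' i)
    intro j
    rw [← hfar, ← hfar, hst2]
  have hdstep : ∀ i, F (s (i + 1)) - F (i + 1) ≤ F (s i) - F i := by
    intro i
    have hF1 : F i ≤ F (i + 1) := hmono (by linarith)
    have hE1 : E i ≤ E (i + 1) := hEmono (by linarith)
    rcases le_total (s i) (s (i + 1)) with hle | hle
    · have hF2 := hmono hle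
      have hE2 := hEmono hle
      have h1 : E (s i) - F (s (i + 1)) = E i - F (i + 1) := by
        apply hcard _ _ _ _ (hFE i)
        intro j
        have e1 := hst2 i j
        have e2 := hst2 (i + 1) j
        rw [hfar, hfar] at e1 e2
        constructor
        · rintro ⟨a, b⟩
          exact ⟨(e2.2 ⟨a, b.trans hE1⟩).1, (e1.2 ⟨hF1.trans a, b⟩).2⟩
        · rintro ⟨a, b⟩
          exact ⟨(e2.1 ⟨a, b.trans hE2⟩).1, (e1.1 ⟨hF2.trans a, b⟩).2⟩
      have := hdE i
      linarith
    · have hF2 := hmono hle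
      linarith
  have hdconst := periodic_antitone_const (fun i => F (s i) - F i) m hm
    (fun i => by simp only [hsper, hper]; ring) hdstep
  obtain ⟨d, hd⟩ : ∃ d, ∀ i, F (s i) = F i + d :=
    ⟨F (s 0) - F 0, fun i => by linarith [hdconst i 0]⟩
  have hd' : ∀ i, F (t i) = F i - d := by
    intro i
    have := hd (t i)
    rw [hstid] at this
    linarith
  have h1 := shift_nonpos F s t m d hlt hFF hst hd hd'
  have h2 := shift_nonpos F t s m (-d) hlt hFF hts' (fun i => by rw [hd']; ring)
    (fun i => by rw [hd]; ring)
  have hd0 : d = 0 := by linarith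
  have e1 : F (s i) = F i := by rw [hd, hd0, add_zero]
  have e2 := hdE i
  rw [hfar, hfar, e1, show E (s i) = E i by linarith]

/-! ### Unrolled models of proper circular-arc graphs -/

/-- An unrolling to `ℤ` (with period `m`) of a cyclic order on `V`, together with a function `F`
describing the reflexive relation `A` (equality or adjacency): the clockwise neighbors of `i`
are the other indices in `[i, F i)`. For an arc model, `F i` is the first index whose arc starts
after the end of the arc of `i`. -/
structure RoundLift {V : Type*} (A : V → V → Prop) where
  /-- the period -/
  m : ℤ
  /-- the first index past the clockwise closed neighborhood -/
  F : ℤ → ℤ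
  /-- the vertex represented by an index -/
  vert : ℤ → V
  m_pos : 0 < m
  mono : Monotone F
  lt_F : ∀ i, i < F i
  per : ∀ i, F (i + m) = F i + m
  surj : Function.Surjective vert
  vert_per : ∀ i k, vert (i + k * m) = vert i
  vert_eq : ∀ i j, vert i = vert j → ∃ k, j = i + k * m
  adj : ∀ i j, A (vert i) (vert j) ↔ ∃ k, i < F (j + k * m) ∧ j + k * m < F i

namespace RoundLift

variable {V : Type*} {A : V → V → Prop} (L : RoundLift A)

/-- Adjacency (or equality) of indices in `ℤ`, before reduction modulo the period. -/
def Near (i j : ℤ) : Prop := i < L.F j ∧ j < L.F i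


lemma per_mul (i k : ℤ) : L.F (i + k * L.m) = L.F i + k * L.m := by
  induction k with
  | zero => simp
  | succ k ih =>
    have := L.per (i + k * L.m)
    rw [show i + ((k : ℤ) + 1) * L.m = i + k * L.m + L.m by ring, this, ih]; ring
  | pred k ih =>
    have := L.per (i + (-(k : ℤ) - 1) * L.m)
    rw [show i + (-(k : ℤ) - 1) * L.m + L.m = i + -(k : ℤ) * L.m by ring, ih] at this
    linarith

/-- An index is near at most one copy of a given vertex. -/
lemma near_unique (hFF : ∀ i, L.F (L.F i) < i + L.m) {i j k : ℤ}
    (h : L.Near i j) (h' : L.Near i (j + k * L.m)) : k = 0 := by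
  have hm := L.m_pos
  -- going from `j` through `i` to a later copy of `j` would take `F ∘ F` past a full turn
  have aux : ∀ j k, 0 < k → L.Near i j → L.Near i (j + k * L.m) → False := by
    intro j k hk h h'
    have h1 := L.mono h'.2.le
    rw [per_mul] at h1
    have h2 := hFF i
    have h3 := h.1
    nlinarith
  rcases lt_trichotomy k 0 with hk | hk | hk
  · refine (aux (j + k * L.m) (-k) (by linarith) h' ?_).elim
    rwa [show j + k * L.m + -k * L.m = j by ring]
  · exact hk
  · exact (aux j k hk h h').elim

lemma near_of_adj {i : ℤ} {v : V} (h : A (L.vert i) v) : ∃ j, L.vert j = v ∧ L.Near i j := by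
  obtain ⟨j, rfl⟩ := L.surj v
  obtain ⟨k, hk⟩ := (L.adj i j).1 h
  exact ⟨j + k * L.m, L.vert_per j k, hk⟩

lemma adj_of_near {i j k : ℤ} (h : L.Near i (j + k * L.m)) : A (L.vert i) (L.vert j) :=
  (L.adj i j).2 ⟨k, h⟩

lemma not_adj_of_far {i j : ℤ} (h : Far L.F L.m i j) : ¬ A (L.vert i) (L.vert j) := by
  rw [L.adj]
  rintro ⟨k, h1, h2⟩
  have hm := L.m_pos
  rw [per_mul] at h1
  obtain ⟨h3, h4⟩ := h
  rcases le_or_gt 0 k with hk | hk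
  · nlinarith
  · have : k + 1 ≤ 0 := by linarith
    nlinarith

/-- A non-adjacent pair whose indices are less than one period apart is far. -/
lemma far_of_not_adj {i j : ℤ} (h : ¬ A (L.vert i) (L.vert j)) (h1 : i ≤ j) (h2 : j < i + L.m) :
    Far L.F L.m i j := by
  constructor
  · by_contra hc
    push Not at hc
    exact h (L.adj_of_near (k := 0) (by simpa using ⟨h1.trans_lt (L.lt_F j), hc⟩))
  · by_contra hc
    push Not at hc
    refine h (L.adj_of_near (k := -1) ⟨?_, ?_⟩)
    · rw [per_mul]; linarith
    · have := L.lt_F i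
      linarith

lemma not_adj_iff (i j : ℤ) :
    ¬ A (L.vert i) (L.vert j) ↔ ∃ k, Far L.F L.m i (j + k * L.m) := by
  constructor
  · intro h
    refine ⟨-((j - i) / L.m), L.far_of_not_adj (by rwa [L.vert_per]) ?_ ?_⟩
    · have := Int.mul_ediv_self_le (x := j - i) L.m_pos.ne'
      linarith
    · have := Int.lt_mul_ediv_self_add (x := j - i) L.m_pos
      linarith
  · rintro ⟨k, hk⟩
    have := L.not_adj_of_far hk
    rwa [L.vert_per] at this

/-- If `s` and `t` move every index to a near one and preserve non-adjacency of vertices, then they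
preserve far pairs of indices: the two members of a far pair cannot jump across each other. -/
lemma far_map (s t : ℤ → ℤ) (hs : ∀ i, L.Near i (s i)) (ht : ∀ i, L.Near i (t i))
    (hst : ∀ i j, ¬ A (L.vert i) (L.vert j) → ¬ A (L.vert (s i)) (L.vert (t j))) (i j : ℤ)
    (h : Far L.F L.m i j) : Far L.F L.m (s i) (t j) := by
  have hn := hst i j (L.not_adj_of_far h)
  obtain ⟨h1, h2⟩ := h
  obtain ⟨s1, s2⟩ := hs i
  obtain ⟨t1, t2⟩ := ht j
  have hA : ∀ k, ¬ L.Near (s i) (t j + k * L.m) := fun k hk => hn (L.adj_of_near hk)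
  refine L.far_of_not_adj hn ?_ ?_
  · by_contra hc
    push Not at hc
    have h3 : i < t j := by
      by_contra hc'
      push Not at hc'
      have := L.mono hc'
      linarith
    have h4 := L.mono h3.le
    refine hA 0 ⟨?_, ?_⟩
    · simp only [zero_mul, add_zero]; linarith
    · have := L.lt_F (s i)
      linarith
  · by_contra hc
    push Not at hc
    refine hA (-1) ⟨?_, ?_⟩
    · rw [per_mul]
      have := L.lt_F (t j)
      linarith
    · linarith

/-- Every permutation `σ` with `v` adjacent or equal to `σ v`, and for which
`A u (σ v)` is symmetric in `u`, `v`, sends each vertex to a twin. -/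
lemma twin (hFF : ∀ i, L.F (L.F i) < i + L.m) (hsymm : ∀ u v, A u v → A v u)
    (σ : Equiv.Perm V) (hσ : ∀ v, A v (σ v))
    (hA : ∀ u v, A u (σ v) ↔ A (σ u) v) (u v : V) : A (σ u) v ↔ A u v := by
  have hs : ∀ i, ∃ j, L.vert j = σ (L.vert i) ∧ L.Near i j := fun i => L.near_of_adj (hσ _)
  have ht : ∀ i, ∃ j, L.vert j = σ.symm (L.vert i) ∧ L.Near i j := fun i =>
    L.near_of_adj (hsymm _ _ (by simpa using hσ (σ.symm (L.vert i))))
  choose s hs1 hs2 using hs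
  choose t ht1 ht2 using ht
  -- a near index is determined by the vertex it represents
  have huniq : ∀ i j j', L.vert j = L.vert j' → L.Near i j → L.Near i j' → j' = j := by
    intro i j j' hv h h'
    obtain ⟨k, rfl⟩ := L.vert_eq _ _ hv
    rw [L.near_unique hFF h h', zero_mul, add_zero]
  have hts : ∀ i, t (s i) = i := fun i =>
    huniq (s i) _ _ (by rw [ht1, hs1, Equiv.symm_apply_apply]) (hs2 i).symm (ht2 _)
  have hst : ∀ i, s (t i) = i := fun i =>
    huniq (t i) _ _ (by rw [hs1, ht1, Equiv.apply_symm_apply]) (ht2 i).symm (hs2 _)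
  have hsper : ∀ i, s (i + L.m) = s i + L.m := by
    intro i
    have hp := fun j => L.vert_per j 1
    simp only [one_mul] at hp
    refine (huniq (i + L.m) _ _ ?_ (hs2 _) ⟨?_, ?_⟩).symm
    · rw [hs1, hp, hp, hs1]
    · rw [L.per]; have := (hs2 i).1; linarith
    · rw [L.per]; have := (hs2 i).2; linarith
  have hfs := L.far_map s t hs2 ht2 (by
    intro i j h
    rwa [hs1, ht1, ← hA, Equiv.apply_symm_apply])
  have hft := L.far_map t s ht2 hs2 (by
    intro i j h
    rwa [hs1, ht1, hA, Equiv.apply_symm_apply])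
  have key := far_iff_of_invariant L.F s t L.m L.m_pos L.mono L.lt_F L.per hFF hts hst hsper hfs hft
  obtain ⟨i, rfl⟩ := L.surj u
  obtain ⟨j, rfl⟩ := L.surj v
  rw [← not_iff_not, ← hs1, L.not_adj_iff, L.not_adj_iff]
  simp only [key]

/-- If two clockwise jumps from `i` complete a full turn, then `[i, F i)` and `[F i, F (F i))` are
two cliques covering all vertices. -/
lemma two_cliques {i : ℤ} (hi : i + L.m ≤ L.F (L.F i)) :
    ∃ U : Set V, (∀ u ∈ U, ∀ v ∈ U, A u v) ∧ (∀ u ∉ U, ∀ v ∉ U, A u v) := by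
  have hclique : ∀ i j j', i ≤ j → j < L.F i → i ≤ j' → j' < L.F i →
      A (L.vert j) (L.vert j') := by
    intro i j j' h1 h2 h3 h4
    refine L.adj_of_near (k := 0) ?_
    simp only [zero_mul, add_zero]
    exact ⟨h2.trans_le (L.mono h3), h4.trans_le (L.mono h1)⟩
  refine ⟨{v | ∃ j, i ≤ j ∧ j < L.F i ∧ L.vert j = v}, ?_, ?_⟩
  · rintro _ ⟨j, h1, h2, rfl⟩ _ ⟨j', h3, h4, rfl⟩
    exact hclique i j j' h1 h2 h3 h4
  · have hout : ∀ v, v ∉ {v | ∃ j, i ≤ j ∧ j < L.F i ∧ L.vert j = v} →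
        ∃ j, L.F i ≤ j ∧ j < L.F (L.F i) ∧ L.vert j = v := by
      intro v hv
      obtain ⟨j, rfl⟩ := L.surj v
      have h1 := Int.mul_ediv_self_le (x := j - i) L.m_pos.ne'
      have h2 := Int.lt_mul_ediv_self_add (x := j - i) L.m_pos
      refine ⟨j + -((j - i) / L.m) * L.m, ?_, by linarith, L.vert_per _ _⟩
      by_contra hc
      exact hv ⟨j + -((j - i) / L.m) * L.m, by linarith, by linarith, L.vert_per _ _⟩
    intro u hu v hv
    obtain ⟨j, h1, h2, rfl⟩ := hout u hu
    obtain ⟨j', h3, h4, rfl⟩ := hout v hv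
    exact hclique _ j j' h1 h2 h3 h4

end RoundLift
/-! ### Unrolling a proper circular-arc model -/

/-- A nonempty set of integers invariant under translation by `n` is the range of an increasing
enumeration by `ℤ`, under which that translation becomes a translation of indices. -/
lemma exists_enum (P : Set ℤ) (n : ℤ) (hn : 0 < n) (hne : P.Nonempty)
    (hP : ∀ x, x + n ∈ P ↔ x ∈ P) :
    ∃ (m : ℤ) (p : ℤ → ℤ), 0 < m ∧ StrictMono p ∧ (∀ x, x ∈ P ↔ ∃ i, p i = x) ∧
      ∀ i, p (i + m) = p i + n := by
  classical
  have : Nonempty P := hne.to_subtype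
  have : NoMaxOrder P := ⟨fun x => ⟨⟨x + n, (hP _).2 x.2⟩, by
    rw [← Subtype.coe_lt_coe]; simpa using hn⟩⟩
  have : NoMinOrder P := ⟨fun x => ⟨⟨x - n, (hP _).1 (by simp)⟩, by
    rw [← Subtype.coe_lt_coe]; simpa using hn⟩⟩
  let : LocallyFiniteOrder P := Subtype.instLocallyFiniteOrder (fun x => x ∈ P)
  let : SuccOrder P := LinearLocallyFiniteOrder.succOrder P
  let : PredOrder P := LinearLocallyFiniteOrder.predOrder P
  let φ : P ≃o ℤ := orderIsoIntOfLinearSuccPredArch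
  let T : P ≃o P :=
    { toFun := fun x => ⟨x + n, (hP _).2 x.2⟩
      invFun := fun x => ⟨x - n, (hP _).1 (by simp)⟩
      left_inv := fun x => by simp
      right_inv := fun x => by simp
      map_rel_iff' := by
        intro a b
        rw [← Subtype.coe_le_coe, ← Subtype.coe_le_coe]
        simp }
  let g : ℤ ≃o ℤ := (φ.symm.trans T).trans φ
  have hsucc : ∀ i, g (i + 1) = g i + 1 := fun i => g.map_succ i
  have hg : ∀ i, g i = i + g 0 := by
    intro i
    induction i with
    | zero => simp
    | succ k ih => rw [hsucc, ih]; ring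
    | pred k ih =>
      have := hsucc (-(k : ℤ) - 1)
      rw [sub_add_cancel, ih] at this
      linarith
  have hT : ∀ i, ((φ.symm (g i) : P) : ℤ) = (φ.symm i : P) + n := by
    intro i
    simp [g, T]
  refine ⟨g 0, fun i => (φ.symm i : P), ?_, ?_, ?_, ?_⟩
  · rw [← φ.symm.lt_iff_lt, ← Subtype.coe_lt_coe, hT]
    linarith
  · intro i j hij
    exact Subtype.coe_lt_coe.2 (φ.symm.strictMono hij)
  · intro x
    constructor
    · intro hx
      exact ⟨φ ⟨x, hx⟩, by simp⟩
    · rintro ⟨i, rfl⟩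
      exact (φ.symm i).2
  · intro i
    simp only
    rw [← hg, hT]

/-- Indices enumerate the lifted starting points of the arcs; `F` is monotone because the arcs are
pairwise incomparable. -/
lemma exists_roundLift {V : Type*} [Nonempty V] (G : SimpleGraph V) (hG : IsPCAGraph G) :
    Nonempty (RoundLift fun u v => u = v ∨ G.Adj u v) := by
  obtain ⟨n, hn, l, -, harc, hprop, hadj⟩ := hG
  choose hlne a k hkn hl using harc
  have hn' : (0 : ℤ) < n := by exact_mod_cast hn
  have hk : ∀ v, 0 < k v := by
    intro v
    obtain ⟨x, hx⟩ := hlne v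
    rw [hl] at hx
    obtain ⟨i, hi, -⟩ := hx
    omega
  -- a point of the circle lies on the arc of `v` iff some lift of it lies in the lifted interval
  have hmem : ∀ v (x y : ℤ), (x : ZMod n) = a v →
      ((y : ZMod n) ∈ l v ↔ ∃ q : ℤ, x ≤ y + q * n ∧ y + q * n < x + k v) := by
    intro v x y hx
    rw [hl, ← hx]
    constructor
    · rintro ⟨i, hi, h⟩
      have h2 : ((y : ℤ) : ZMod n) = ((x + i : ℤ) : ZMod n) := by rw [h]; push_cast; rfl
      rw [ZMod.intCast_eq_intCast_iff, Int.modEq_iff_dvd] at h2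
      obtain ⟨q, hq⟩ := h2
      refine ⟨q, ?_, ?_⟩ <;> nlinarith
    · rintro ⟨q, h1, h2⟩
      refine ⟨(y + q * n - x).toNat, by omega, ?_⟩
      have h3 : (((y + q * n - x).toNat : ℤ) : ZMod n) = ((y + q * n - x : ℤ) : ZMod n) := by
        rw [Int.toNat_of_nonneg (by linarith)]
      rw [Int.cast_natCast] at h3
      rw [h3]
      push_cast
      simp
  have hcast : ∀ x q : ℤ, ((x + q * n : ℤ) : ZMod n) = (x : ZMod n) := by
    intro x q
    push_cast
    simp
  have hsurjZ : ∀ z : ZMod n, ∃ x : ℤ, (x : ZMod n) = z := ZMod.intCast_surjective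
  -- incomparability, for lifted intervals
  have hinc : ∀ u v (x y : ℤ), (x : ZMod n) = a u → (y : ZMod n) = a v → u ≠ v → x ≤ y →
      x + k u < y + k v := by
    intro u v x y hx hy huv hxy
    by_contra hc
    push Not at hc
    refine hprop v u huv.symm fun z hz => ?_
    obtain ⟨w, rfl⟩ := hsurjZ z
    obtain ⟨q, h1, h2⟩ := (hmem v y w hy).1 hz
    exact (hmem u x w hx).2 ⟨q, by linarith, by linarith⟩
  have hainj : Function.Injective a := by
    intro u v huv
    by_contra hne
    obtain ⟨x, hx⟩ := hsurjZ (a u)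
    have h1 := hinc u v x x hx (hx.trans huv) hne le_rfl
    have h2 := hinc v u x x (hx.trans huv) hx (Ne.symm hne) le_rfl
    linarith
  obtain ⟨m, p, hm, hpmono, hpmem, hpper⟩ := exists_enum {x : ℤ | ∃ v, (x : ZMod n) = a v} n hn'
    (by
      obtain ⟨v⟩ := ‹Nonempty V›
      obtain ⟨x, hx⟩ := hsurjZ (a v)
      exact ⟨x, v, hx⟩)
    (by
      intro x
      have := hcast x 1
      rw [one_mul] at this
      simp only [Set.mem_ofPred_eq, this])
  have hpper' : ∀ i q : ℤ, p (i + q * m) = p i + q * n := by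
    intro i q
    induction q with
    | zero => simp
    | succ q ih =>
      rw [show i + ((q : ℤ) + 1) * m = i + q * m + m by ring, hpper, ih]; ring
    | pred q ih =>
      have := hpper (i + (-(q : ℤ) - 1) * m)
      rw [show i + (-(q : ℤ) - 1) * m + m = i + -(q : ℤ) * m by ring, ih] at this
      linarith
  have hvert : ∀ i, ∃ v, (p i : ZMod n) = a v := fun i => (hpmem (p i)).2 ⟨i, rfl⟩
  choose vert hvert using hvert
  have vert_per : ∀ i q, vert (i + q * m) = vert i := by
    intro i q
    apply hainj
    rw [← hvert, ← hvert, hpper', hcast]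
  have vert_eq : ∀ i j, vert i = vert j → ∃ q, j = i + q * m := by
    intro i j hij
    have h1 : (p i : ZMod n) = p j := by rw [hvert, hvert, hij]
    rw [ZMod.intCast_eq_intCast_iff, Int.modEq_iff_dvd] at h1
    obtain ⟨q, hq⟩ := h1
    refine ⟨q, hpmono.injective ?_⟩
    rw [hpper']
    linarith
  -- `F i` is the least index whose start lies at or after the (exclusive) end of the arc of `i`
  have hF : ∀ i, ∃ f, ∀ j, f ≤ j ↔ p i + k (vert i) ≤ p j := by
    intro i
    obtain ⟨f, hf, hmin⟩ := Int.exists_least_of_bdd (P := fun j => p i + k (vert i) ≤ p j)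
      ⟨i, fun j hj => hpmono.le_iff_le.1 (by linarith)⟩
      ⟨i + m, by
        have := hkn (vert i)
        rw [hpper]
        have : (k (vert i) : ℤ) ≤ n := by exact_mod_cast this
        linarith⟩
    exact ⟨f, fun j => ⟨fun hj => hf.trans (hpmono.monotone hj), hmin j⟩⟩
  choose F hF using hF
  have hF' : ∀ i j, j < F i ↔ p j < p i + k (vert i) := by
    intro i j
    rw [← not_le, hF, not_le]
  have hend : ∀ i j, i ≤ j → p i + k (vert i) ≤ p j + k (vert j) := by
    intro i j hij
    by_cases hv : vert i = vert j
    · rw [hv]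
      have := hpmono.monotone hij
      linarith
    · exact (hinc _ _ _ _ (hvert i) (hvert j) hv (hpmono.monotone hij)).le
  refine ⟨{ m := m, F := F, vert := vert, m_pos := hm, mono := ?_, lt_F := ?_, per := ?_,
            surj := ?_, vert_per := vert_per, vert_eq := vert_eq, adj := ?_ }⟩
  · intro i j hij
    rw [hF]
    exact (hend i j hij).trans ((hF j _).1 le_rfl)
  · intro i
    rw [hF']
    have := hk (vert i)
    linarith [show (0 : ℤ) < k (vert i) by exact_mod_cast this]
  · intro i
    have hv := vert_per i 1
    rw [one_mul] at hv
    have h2 : ∀ j, F (i + m) ≤ j ↔ F i + m ≤ j := by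
      intro j
      have h3 := hpper (j - m)
      rw [sub_add_cancel] at h3
      rw [hF, hpper, hv, h3, ← le_sub_iff_add_le (a := F i), hF]
      constructor <;> intro h <;> linarith
    exact le_antisymm ((h2 _).2 le_rfl) ((h2 _).1 le_rfl)
  · intro v
    obtain ⟨x, hx⟩ := hsurjZ (a v)
    obtain ⟨i, rfl⟩ := (hpmem x).1 ⟨v, hx⟩
    exact ⟨i, hainj (by rw [← hvert, hx])⟩
  · intro i j
    have h1 : (vert i = vert j ∨ G.Adj (vert i) (vert j)) ↔
        (l (vert i) ∩ l (vert j)).Nonempty := by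
      by_cases hv : vert i = vert j
      · simp [hv, hlne]
      · rw [hadj _ _ hv]
        simp [hv]
    rw [h1]
    have h2 : ∀ q, (i < F (j + q * m) ∧ j + q * m < F i) ↔
        p i < p j + q * n + k (vert j) ∧ p j + q * n < p i + k (vert i) := by
      intro q
      rw [hF', hF', hpper', vert_per]
    simp only [h2]
    have ki : (0 : ℤ) < k (vert i) := by exact_mod_cast hk (vert i)
    have kj : (0 : ℤ) < k (vert j) := by exact_mod_cast hk (vert j)
    constructor
    · rintro ⟨z, hz1, hz2⟩
      obtain ⟨y, rfl⟩ := hsurjZ z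
      obtain ⟨q1, h3, h4⟩ := (hmem _ _ y (hvert i)).1 hz1
      obtain ⟨q2, h5, h6⟩ := (hmem _ _ y (hvert j)).1 hz2
      exact ⟨q1 - q2, by linarith, by linarith⟩
    · rintro ⟨q, h3, h4⟩
      -- the later of the two starting points is common to both arcs
      refine ⟨((max (p i) (p j + q * n) : ℤ) : ZMod n), ?_, ?_⟩
      · rw [hmem _ _ _ (hvert i)]
        refine ⟨0, ?_, ?_⟩ <;> rw [zero_mul, add_zero]
        · exact le_max_left _ _
        · exact max_lt (by linarith) h4
      · rw [hmem _ _ _ (hvert j)]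
        refine ⟨-q, ?_, ?_⟩
        · linarith [le_max_right (p i) (p j + q * n)]
        · have : max (p i) (p j + q * n) < p j + q * n + k (vert j) := max_lt h3 (by linarith)
          linarith

/-- A proper circular-arc graph `G` with non-bipartite complement is
exactly reconstructible from its closed neighborhood hypergraph: if `H` is any graph
on the same vertex set with `N_H[v] = N_G[σ(v)]` for a permutation `σ`, then `H = G`. -/
theorem stmt18 {V : Type*} [Fintype V] (G H : SimpleGraph V)
    (hG : IsPCAGraph G) (hnb : ¬ IsBipartite Gᶜ) (σ : Equiv.Perm V)
    (h : ∀ v, ClosedNbhd H v = ClosedNbhd G (σ v)) :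
    H = G := by
  rcases isEmpty_or_nonempty V with hV | hV
  · exact Subsingleton.elim _ _
  obtain ⟨L⟩ := exists_roundLift G hG
  have hFF : ∀ i, L.F (L.F i) < i + L.m := by
    intro i
    by_contra hc
    push Not at hc
    obtain ⟨U, h1, h2⟩ := L.two_cliques hc
    refine hnb ⟨U, fun u hu v hv => ?_, fun u hu v hv => ?_⟩
    · rw [SimpleGraph.compl_adj]
      have := h1 u hu v hv
      tauto
    · rw [SimpleGraph.compl_adj]
      have := h2 u hu v hv
      tauto
  have hN : ∀ u v, (u = v ∨ H.Adj u v) ↔ (u = σ v ∨ G.Adj u (σ v)) := fun u v =>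
    Set.ext_iff.1 (h v) u
  have hsymm : ∀ u v, (u = v ∨ G.Adj u v) → (v = u ∨ G.Adj v u) := fun u v h =>
    h.imp Eq.symm SimpleGraph.Adj.symm
  have key := L.twin hFF hsymm σ (fun v => (hN v v).1 (Or.inl rfl)) (by
    intro u v
    rw [← hN, eq_comm, H.adj_comm, hN]
    exact ⟨hsymm _ _, hsymm _ _⟩)
  ext u v
  by_cases huv : u = v
  · simp [huv]
  · have h1 := hN u v
    have h2 := key v u
    have h3 : (u = σ v ∨ G.Adj u (σ v)) ↔ (σ v = u ∨ G.Adj (σ v) u) := ⟨hsymm _ _, hsymm _ _⟩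
    rw [h3, h2] at h1
    simpa [huv, Ne.symm huv, G.adj_comm v u] using h1
end
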